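/- arXiv:2109.10555 — 2 statements merged into one kernel-verified Lean document; each statement's English description precedes it below -/
import Mathlib

section
/- Fefferman's weighted maximal function bound: Let $p\in(1,\infty)$ and let $\lambda$ be a bi-parameter $A_p$ weight on $\mathbb{R}^{d_1}\times\mathbb{R}^{d_2}$. Define $M^\lambda_{\mathcal{D}}f=\sup_{R\in\mathcal{D}}1_R\,\langle|f|\rangle^\lambda_R$ where $\langle f\rangle_R^\lambda=\frac{1}{\lambda(R)}\int_R f\,\lambda$. Then for all $s\in(1,\infty)$ there is a constant $C$ depending only on $s$, $p$ and the dimensions such that $\|M^\lambda_{\mathcal{D}}f\|_{L^s(\lambda)}\le C\,[\lambda]_{A_p}^{1+1/s}\|f\|_{L^s(\lambda)}$. -/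
open MeasureTheory ENNReal
open scoped Classical

noncomputable section

/-- A point of the bi-parameter space `ℝ^{d₁} × ℝ^{d₂}`. -/
abbrev Pt (d₁ d₂ : ℕ) := (Fin d₁ → ℝ) × (Fin d₂ → ℝ)

/-- The axis-parallel cube with corner `a` and side length `h`. -/
def cubeOf {d : ℕ} (a : Fin d → ℝ) (h : ℝ) : Set (Fin d → ℝ) :=
  Set.univ.pi fun i => Set.Ico (a i) (a i + h)

/-- An axis-parallel cube in `ℝ^d` (with positive side length). -/
def IsCube {d : ℕ} (I : Set (Fin d → ℝ)) : Prop :=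
  ∃ a h, 0 < h ∧ I = cubeOf a h

/-- A rectangle `R = I¹ × I²`: a product of axis-parallel cubes. -/
def IsRect {d₁ d₂ : ℕ} (R : Set (Pt d₁ d₂)) : Prop :=
  ∃ I₁ I₂, IsCube I₁ ∧ IsCube I₂ ∧ R = I₁ ×ˢ I₂

/-- A standard dyadic cube `2^{-k}([0,1)^d + m)`. -/
def IsDyadicCube {d : ℕ} (I : Set (Fin d → ℝ)) : Prop :=
  ∃ (k : ℤ) (m : Fin d → ℤ),
    I = Set.univ.pi fun i => Set.Ico ((2:ℝ) ^ (-k) * m i) ((2:ℝ) ^ (-k) * (m i + 1))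

/-- A standard dyadic rectangle. -/
def IsDyadicRect {d₁ d₂ : ℕ} (R : Set (Pt d₁ d₂)) : Prop :=
  ∃ I₁ I₂, IsDyadicCube I₁ ∧ IsDyadicCube I₂ ∧ R = I₁ ×ˢ I₂

variable {X : Type*} [MeasureSpace X]

/-- `ℝ≥0∞`-valued average `⟨f⟩_R` of a (nonnegative) function over `R`. -/
def avgE (R : Set X) (f : X → ℝ) : ℝ≥0∞ :=
  (∫⁻ x in R, ENNReal.ofReal (f x)) / volume R

/-- essential supremum of a (nonnegative) function on `R`. -/
def essSupE (R : Set X) (f : X → ℝ) : ℝ≥0∞ :=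
  essSup (fun x => ENNReal.ofReal (f x)) (volume.restrict R)

/-- real-valued average `⟨f⟩_R`. -/
def avgR (R : Set X) (f : X → ℝ) : ℝ :=
  (∫ x in R, f x) / (volume R).toReal

/-- Hölder conjugate exponent on `ℝ≥0∞`. -/
def dualExp (p : ℝ≥0∞) : ℝ≥0∞ :=
  if p = 1 then ∞ else if p = ∞ then 1 else ENNReal.ofReal (p.toReal / (p.toReal - 1))

/-- `⟨w^p⟩_R^{1/p}`, interpreted as `ess sup_R w` when `p = ∞`. -/
def mainFactor (R : Set X) (w : X → ℝ) (p : ℝ≥0∞) : ℝ≥0∞ :=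
  if p = ∞ then essSupE R w
  else (avgE R fun x => w x ^ p.toReal) ^ (1 / p.toReal)

/-- `⟨w^{-p'}⟩_R^{1/p'}`, interpreted as `ess sup_R w⁻¹` when `p = 1`. -/
def dualFactor (R : Set X) (w : X → ℝ) (p : ℝ≥0∞) : ℝ≥0∞ :=
  if p = 1 then essSupE R fun x => (w x)⁻¹
  else (avgE R fun x => w x ^ (-(dualExp p).toReal)) ^ (1 / (dualExp p).toReal)

/-- `A_r` ratio on a set, `1 ≤ r < ∞`, with the `A_1` interpretation at `r = 1`. -/
def ArRatio (r : ℝ≥0∞) (R : Set X) (v : X → ℝ) : ℝ≥0∞ :=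
  if r = 1 then avgE R v * essSupE R (fun x => (v x)⁻¹)
  else avgE R v * (avgE R fun x => v x ^ (-(1 / (r.toReal - 1)))) ^ (r.toReal - 1)

/-- Bi-parameter `A_r` characteristic: supremum over all rectangles. -/
def ArRect {d₁ d₂ : ℕ} (r : ℝ≥0∞) (v : Pt d₁ d₂ → ℝ) : ℝ≥0∞ :=
  ⨆ (R : Set (Pt d₁ d₂)) (_ : IsRect R), ArRatio r R v

/-- One-parameter `A_r` characteristic: supremum over all cubes. -/
def ArCube {d : ℕ} (r : ℝ≥0∞) (v : (Fin d → ℝ) → ℝ) : ℝ≥0∞ :=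
  ⨆ (I : Set (Fin d → ℝ)) (_ : IsCube I), ArRatio r I v

/-- `A_∞` ratio `⟨v⟩_R exp(⟨log v⁻¹⟩_R)`. -/
def AinftyRatio (R : Set X) (v : X → ℝ) : ℝ≥0∞ :=
  avgE R v * ENNReal.ofReal (Real.exp (avgR R fun x => Real.log (v x)⁻¹))

/-- Bi-parameter `A_∞` characteristic. -/
def AinftyRect {d₁ d₂ : ℕ} (v : Pt d₁ d₂ → ℝ) : ℝ≥0∞ :=
  ⨆ (R : Set (Pt d₁ d₂)) (_ : IsRect R), AinftyRatio R v

/-- Multilinear `A_{\vec p}` ratio `⟨w^p⟩_R^{1/p} ∏_i ⟨w_i^{-p_i'}⟩_R^{1/p_i'}`. -/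
def AvecRatio {n : ℕ} (p : Fin n → ℝ≥0∞) (w : Fin n → X → ℝ) (R : Set X) : ℝ≥0∞ :=
  mainFactor R (fun x => ∏ i, w i x) (∑ i, (p i)⁻¹)⁻¹ * ∏ i, dualFactor R (w i) (p i)

/-- Multilinear bi-parameter `A_{\vec p}` characteristic. -/
def AvecRect {d₁ d₂ n : ℕ} (p : Fin n → ℝ≥0∞) (w : Fin n → Pt d₁ d₂ → ℝ) : ℝ≥0∞ :=
  ⨆ (R : Set (Pt d₁ d₂)) (_ : IsRect R), AvecRatio p w R

/-- `A^*_{\vec p}` ratio: `⟨w⟩_R ⟨w_{n+1}^{-p}⟩_R^{1/p} ∏_{i=1}^n ⟨w_i^{-p_i'}⟩_R^{1/p_i'}`. -/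
def AstarRatio {n : ℕ} (p : Fin n → ℝ≥0∞) (w : Fin n → X → ℝ) (wl : X → ℝ) (R : Set X) :
    ℝ≥0∞ :=
  avgE R (fun x => (∏ i, w i x) * wl x) *
    (avgE R fun x => wl x ^ (-((∑ i, (p i)⁻¹)⁻¹).toReal)) ^ (∑ i, (p i)⁻¹).toReal *
    ∏ i, dualFactor R (w i) (p i)

/-- `A^*_{\vec p}` characteristic. -/
def AstarRect {d₁ d₂ n : ℕ} (p : Fin n → ℝ≥0∞) (w : Fin n → Pt d₁ d₂ → ℝ)
    (wl : Pt d₁ d₂ → ℝ) : ℝ≥0∞ :=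
  ⨆ (R : Set (Pt d₁ d₂)) (_ : IsRect R), AstarRatio p w wl R

/-- `μ`-weighted `ℝ≥0∞`-valued average over `R`. -/
def wAvg (R : Set X) (μ f : X → ℝ) : ℝ≥0∞ :=
  (∫⁻ x in R, ENNReal.ofReal (f x) * ENNReal.ofReal (μ x)) /
    (∫⁻ x in R, ENNReal.ofReal (μ x))

/-- `A_{q_n,q}(μ)` ratio, with ess sup interpretations when `q = ∞` or `q_n = 1`. -/
def AqRatio (qn q : ℝ≥0∞) (μ V : X → ℝ) (R : Set X) : ℝ≥0∞ :=
  (if q = ∞ then essSupE R V else (wAvg R μ fun x => V x ^ q.toReal) ^ (1 / q.toReal)) *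
  (if qn = 1 then essSupE R (fun x => (V x)⁻¹)
   else (wAvg R μ fun x => V x ^ (-(dualExp qn).toReal)) ^ (1 / (dualExp qn).toReal))

/-- `A_{q_n,q}(μ)` characteristic: supremum over rectangles. -/
def AqRect {d₁ d₂ : ℕ} (qn q : ℝ≥0∞) (μ V : Pt d₁ d₂ → ℝ) : ℝ≥0∞ :=
  ⨆ (R : Set (Pt d₁ d₂)) (_ : IsRect R), AqRatio qn q μ V R

/-- `μ`-weighted `A_1` characteristic of `u`: `sup_R ⟨u⟩_R^μ · ess sup_R u⁻¹`. -/
def A1wRect {d₁ d₂ : ℕ} (μ u : Pt d₁ d₂ → ℝ) : ℝ≥0∞ :=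
  ⨆ (R : Set (Pt d₁ d₂)) (_ : IsRect R), wAvg R μ u * essSupE R (fun x => (u x)⁻¹)

/-- `L^p` norm of an `ℝ≥0∞`-valued function, `0 < p ≤ ∞`. -/
def eNorm (g : X → ℝ≥0∞) (p : ℝ≥0∞) : ℝ≥0∞ :=
  if p = ∞ then essSup g volume else (∫⁻ x, g x ^ p.toReal) ^ (1 / p.toReal)

/-- `L^s(λ)` norm of an `ℝ≥0∞`-valued function, `0 < s < ∞`. -/
def eNormW (g : X → ℝ≥0∞) (s : ℝ) (lam : X → ℝ) : ℝ≥0∞ :=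
  (∫⁻ x, g x ^ s * ENNReal.ofReal (lam x)) ^ (1 / s)

/-- weak `L^p` quasinorm with respect to the measure `μ`. -/
def weakNorm {α : Type*} [MeasurableSpace α] (g : α → ℝ) (p : ℝ) (μ : Measure α) : ℝ≥0∞ :=
  ⨆ (t : ℝ) (_ : 0 < t), ENNReal.ofReal t * (μ {x | t < |g x|}) ^ (1 / p)

end

/-- The weighted dyadic maximal function `M^λ_𝒟 f = sup_{R ∈ 𝒟} 1_R ⟨|f|⟩^λ_R`. -/
noncomputable def MDw {d₁ d₂ : ℕ} (lam f : Pt d₁ d₂ → ℝ) (x : Pt d₁ d₂) : ℝ≥0∞ :=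
  ⨆ (R : Set (Pt d₁ d₂)) (_ : IsDyadicRect R) (_ : x ∈ R),
    (∫⁻ y in R, ENNReal.ofReal (|f y| * lam y)) / (∫⁻ y in R, ENNReal.ofReal (lam y))

/-!
For a fixed scale `K` in the first variable the dyadic rectangles form a nested family, so Doob's
maximal inequality holds for them with respect to every measure. The bi-parameter maximal function
of `μ = λ dx` is reduced to it by the Córdoba–Fefferman selection.

Run through the rectangles `R = I¹ × I²` with `⟨|f|⟩_R > τ` in order of decreasing `I¹`, and let `U`
be the union of those already selected. Every earlier first side being at least as long as `I¹`, the
slice of `U` over `I²` is the same at all points of `I¹`. If the slice fills half of `I²`, then `R`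
is skipped; the `A_p` condition makes `U` occupy a proportion at least `B⁻¹`, `B = 2 ^ p [λ]`, of
every thinner rectangle `I × I²`, `I ⊆ I¹`. Otherwise `R` is selected, and its new part occupies
such a proportion of every `I × I²`. Taking `I` of a common smallest scale `K`:

* the union of all these rectangles is covered by one-parameter rectangles of which `U` fills a
  proportion `B⁻¹`, so its measure is at most `B μ(U)`;
* `∫_R f dμ` is at most `B` times the integral over the new part of `R` of the one-parameter maximal
  function `g` of `f`, so that `τ μ(U)` is at most the integral of `2 B g` over `{2 B g > τ}`.

Together these bound `τ μ(M f > τ)` by `B ∫_{2 B g > τ} 2 B g dμ`. Integrating in `τ` and applying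
Doob's inequality to `g` gives the power `B ^ (s + 1)` for `‖M f‖ ^ s`.
-/

section LayerCake

variable {X : Type*} [MeasurableSpace X] {μ ρ : Measure X}

theorem lintegral_Ioi_rpow_eq_top (a : ℝ) :
    ∫⁻ t in Set.Ioi (0 : ℝ), ENNReal.ofReal (t ^ a) = ∞ := by
  by_contra h
  refine not_integrableOn_Ioi_rpow a ((lintegral_ofReal_ne_top_iff_integrable ?_ ?_).1 h)
  · exact Measurable.aestronglyMeasurable (by fun_prop)
  · exact (ae_restrict_iff' measurableSet_Ioi).2
      (.of_forall fun t ht => Real.rpow_nonneg (le_of_lt ht) a)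

theorem lintegral_rpow_eq_lintegral_meas_ofReal_lt_mul {G : X → ℝ≥0∞} (hG : AEMeasurable G μ)
    {a : ℝ} (ha : 0 < a) :
    ∫⁻ x, G x ^ a ∂μ = ENNReal.ofReal a *
      ∫⁻ t in Set.Ioi (0 : ℝ), μ {x | ENNReal.ofReal t < G x} * ENNReal.ofReal (t ^ (a - 1)) := by
  by_cases hfin : ∀ᵐ x ∂μ, G x ≠ ∞
  · have hreal : ∫⁻ x, G x ^ a ∂μ = ∫⁻ x, ENNReal.ofReal ((G x).toReal ^ a) ∂μ :=
      lintegral_congr_ae <| hfin.mono fun x hx => by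
        simp only [← ENNReal.ofReal_rpow_of_nonneg toReal_nonneg ha.le, ofReal_toReal hx]
    rw [hreal, lintegral_rpow_eq_lintegral_meas_lt_mul μ (.of_forall fun _ => toReal_nonneg)
      hG.ennreal_toReal ha]
    congr 1
    refine setLIntegral_congr_fun measurableSet_Ioi fun t ht => ?_
    have hlevel : {x | t < (G x).toReal} =ᵐ[μ] {x | ENNReal.ofReal t < G x} :=
      hfin.mono fun x hx => propext (ofReal_lt_iff_lt_toReal (le_of_lt ht) hx).symm
    simp only [measure_congr hlevel]
  · have hpos : μ {x | G x = ∞} ≠ 0 := by simpa [ae_iff] using hfin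
    have hlhs : ∫⁻ x, G x ^ a ∂μ = ∞ := by
      by_contra h
      refine hfin ((ae_lt_top' (hG.pow_const a) h).mono fun x hx hxtop => ?_)
      simp [hxtop, ha] at hx
    rw [hlhs, eq_comm, eq_top_iff]
    calc ∞ = ENNReal.ofReal a *
          ∫⁻ t in Set.Ioi (0 : ℝ), μ {x | G x = ∞} * ENNReal.ofReal (t ^ (a - 1)) := by
          rw [lintegral_const_mul _ (by fun_prop), lintegral_Ioi_rpow_eq_top, mul_top hpos,
            mul_top (by simpa using ha)]
      _ ≤ _ := by
          gcongr with t x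
          rintro (hx : G x = ∞)
          simp [hx]

theorem lintegral_rpow_le_of_mul_measure_lt_le {G H : X → ℝ≥0∞} (hG : AEMeasurable G μ)
    (hH : AEMeasurable H ρ) {s : ℝ} (hs : 1 < s)
    (h : ∀ t : ℝ, ENNReal.ofReal t * μ {x | ENNReal.ofReal t < G x} ≤
      ρ {x | ENNReal.ofReal t < H x}) :
    ∫⁻ x, G x ^ s ∂μ ≤ ENNReal.ofReal (s / (s - 1)) * ∫⁻ x, H x ^ (s - 1) ∂ρ := by
  have hs1 : 0 < s - 1 := sub_pos.2 hs
  rw [lintegral_rpow_eq_lintegral_meas_ofReal_lt_mul hG (by linarith),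
    lintegral_rpow_eq_lintegral_meas_ofReal_lt_mul hH hs1, ← mul_assoc,
    ← ENNReal.ofReal_mul (by positivity), div_mul_cancel₀ _ hs1.ne']
  gcongr ENNReal.ofReal s * ?_
  refine setLIntegral_mono' measurableSet_Ioi fun t (ht : 0 < t) => ?_
  have hpow : ENNReal.ofReal (t ^ (s - 1)) =
      ENNReal.ofReal t * ENNReal.ofReal (t ^ (s - 1 - 1)) := by
    rw [← ENNReal.ofReal_mul ht.le, mul_comm, ← Real.rpow_add_one ht.ne', sub_add_cancel]
  rw [hpow, mul_left_comm, ← mul_assoc]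
  gcongr
  exact h t

/-- The part of the measure `u dμ` carried by the set where `u` exceeds the level `τ`. A weak type
bound `τ μ(G > τ) ≤ upperPart μ u τ univ` at every level can be integrated in `τ` to give the strong
type bound of `G` by `u` for every exponent above `1`. -/
noncomputable def upperPart (μ : Measure X) (u : X → ℝ≥0∞) (τ : ℝ≥0∞) : Measure X :=
  (μ.withDensity u).restrict {x | τ < u x}

theorem le_upperPart_of_two_mul_le {u : X → ℝ≥0∞} (hu : Measurable u) {E : Set X}
    (hE : MeasurableSet E) {τ m : ℝ≥0∞} (hτ : τ ≠ ∞) (hEm : μ E ≤ m) (hm : m ≠ ∞)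
    (h : 2 * (τ * m) ≤ ∫⁻ x in E, u x ∂μ) : τ * m ≤ upperPart μ u τ E := by
  have hV : MeasurableSet {x | τ < u x} := measurableSet_lt measurable_const hu
  have hsplit : ∫⁻ x in E, u x ∂μ ≤ upperPart μ u τ E + τ * m := by
    rw [upperPart, Measure.restrict_apply hE, withDensity_apply _ (hE.inter hV),
      ← lintegral_inter_add_sdiff _ E hV]
    gcongr
    calc ∫⁻ x in E \ {x | τ < u x}, u x ∂μ
        ≤ ∫⁻ _ in E \ {x | τ < u x}, τ ∂μ :=
          setLIntegral_mono measurable_const fun x hx => not_lt.1 hx.2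
      _ = τ * μ (E \ {x | τ < u x}) := setLIntegral_const ..
      _ ≤ τ * m := by gcongr; exact (measure_mono Set.sdiff_subset).trans hEm
  rw [two_mul] at h
  exact ENNReal.le_of_add_le_add_right (mul_ne_top hτ hm) (h.trans hsplit)

theorem lintegral_rpow_le_of_mul_measure_lt_le_upperPart {G u : X → ℝ≥0∞}
    (hG : AEMeasurable G μ) (hu : Measurable u) {s : ℝ} (hs : 1 < s) (a : ℝ≥0∞)
    (h : ∀ t : ℝ, ENNReal.ofReal t * μ {x | ENNReal.ofReal t < G x} ≤
      a * upperPart μ u (ENNReal.ofReal t) Set.univ) :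
    ∫⁻ x, G x ^ s ∂μ ≤ ENNReal.ofReal (s / (s - 1)) * a * ∫⁻ x, u x ^ s ∂μ := by
  refine (lintegral_rpow_le_of_mul_measure_lt_le (ρ := a • μ.withDensity u) hG hu.aemeasurable hs
    fun t => ?_).trans_eq ?_
  · simpa [upperPart] using h t
  · rw [lintegral_smul_measure, lintegral_withDensity_eq_lintegral_mul _ hu (by fun_prop),
      smul_eq_mul, mul_assoc]
    congr! 4 with x
    calc u x * u x ^ (s - 1) = u x ^ (1 : ℝ) * u x ^ (s - 1) := by rw [ENNReal.rpow_one]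
      _ = u x ^ s := by
        rw [← ENNReal.rpow_add_of_nonneg _ _ zero_le_one (sub_nonneg.2 hs.le), add_sub_cancel]

end LayerCake

section Fibers

theorem preimage_image_eq_of_factorsThrough {X ι : Type*} {ψ : X → ι} {T : Set X}
    (hT : (· ∈ T).FactorsThrough ψ) :
    ψ ⁻¹' (ψ '' T) = T :=
  (Set.subset_preimage_image ψ T).antisymm' fun _ ⟨_, hy, hxy⟩ => (hT hxy).mp hy

variable {X ι : Type*} [MeasurableSpace X] [MeasurableSpace ι] [Countable ι]
  [MeasurableSingletonClass ι] {ψ : X → ι} {T : Set X}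

theorem measurableSet_of_factorsThrough (hψ : Measurable ψ) (hT : (· ∈ T).FactorsThrough ψ) :
    MeasurableSet T :=
  preimage_image_eq_of_factorsThrough hT ▸ hψ (Set.to_countable _).measurableSet

theorem measure_le_of_forall_fiber_le {μ ρ : Measure X} (hψ : Measurable ψ)
    (hT : (· ∈ T).FactorsThrough ψ) (h : ∀ x ∈ T, μ (ψ ⁻¹' {ψ x}) ≤ ρ (ψ ⁻¹' {ψ x})) :
    μ T ≤ ρ T := by
  have hcountable : (ψ '' T).Countable := Set.to_countable _
  have hfiber : ∀ i ∈ ψ '' T, MeasurableSet (ψ ⁻¹' {i}) := fun i _ =>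
    hψ (measurableSet_singleton i)
  rw [← preimage_image_eq_of_factorsThrough hT,
    ← tsum_measure_preimage_singleton hcountable hfiber,
    ← tsum_measure_preimage_singleton hcountable hfiber]
  refine ENNReal.tsum_le_tsum ?_
  rintro ⟨_, x, hx, rfl⟩
  exact h x hx

end Fibers

theorem mul_measure_le_setLIntegral_of_lt_laverage {X : Type*} [MeasurableSpace X] {μ : Measure X}
    {f : X → ℝ≥0∞} {Q : Set X} {τ : ℝ≥0∞} (h : τ < ⨍⁻ x in Q, f x ∂μ) :
    τ * μ Q ≤ ∫⁻ x in Q, f x ∂μ := by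
  rw [setLAverage_eq] at h
  exact ENNReal.mul_le_of_le_div h.le

/-- A family of partitions of `X`, indexed by a scale, each finer than those of smaller scale. The
partition of scale `k` is encoded by the map `label k` sending a point to the name of its part. -/
structure NestedPartition (κ X ι : Type*) [Preorder κ] [MeasurableSpace X] [MeasurableSpace ι] where
  label : κ → X → ι
  measurable_label : ∀ k, Measurable (label k)
  factorsThrough_label : ∀ ⦃j k⦄, j ≤ k → (label j).FactorsThrough (label k)

namespace NestedPartition

variable {κ X ι : Type*} [MeasurableSpace X] [MeasurableSpace ι]

section Preorder

variable [Preorder κ] (D : NestedPartition κ X ι)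

/-- The part of scale `k` containing the point `x`. -/
def cell (k : κ) (x : X) : Set X := D.label k ⁻¹' {D.label k x}

/-- The maximal function of `f` with respect to `μ` over the parts whose scale lies in `S`. -/
noncomputable def maximal (μ : Measure X) (S : Finset κ) (f : X → ℝ≥0∞) (x : X) : ℝ≥0∞ :=
  ⨆ k ∈ S, ⨍⁻ y in D.cell k x, f y ∂μ

variable {D}

theorem cell_eq_cell {k : κ} {x y : X} (h : D.label k x = D.label k y) :
    D.cell k x = D.cell k y := by
  simp only [cell, h]

theorem cell_subset_cell {j k : κ} (hjk : j ≤ k) (x : X) : D.cell k x ⊆ D.cell j x :=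
  fun _ hy => D.factorsThrough_label hjk hy

theorem factorsThrough_setOf_exists_cell_le {μ ρ : Measure X} {S : Finset κ} {K : κ}
    (hK : ∀ k ∈ S, k ≤ K) :
    (· ∈ {x | ∃ k ∈ S, μ (D.cell k x) ≤ ρ (D.cell k x)}).FactorsThrough (D.label K) := by
  refine fun x y hxy => propext (exists_congr fun k => and_congr_right fun hk => ?_)
  rw [cell_eq_cell (D.factorsThrough_label (hK k hk) hxy)]

variable [MeasurableSingletonClass ι]

theorem measurableSet_cell (k : κ) (x : X) : MeasurableSet (D.cell k x) :=
  D.measurable_label k (measurableSet_singleton _)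

theorem measurable_laverage_cell [Countable ι] (μ : Measure X) (f : X → ℝ≥0∞) (k : κ) :
    Measurable fun x => ⨍⁻ y in D.cell k x, f y ∂μ :=
  (Measurable.of_discrete (f := fun i => ⨍⁻ y in D.label k ⁻¹' {i}, f y ∂μ)).comp
    (D.measurable_label k)

theorem measurable_maximal [Countable ι] (μ : Measure X) (S : Finset κ) (f : X → ℝ≥0∞) :
    Measurable (D.maximal μ S f) :=
  Measurable.biSup (S : Set κ) S.countable_toSet fun k _ => measurable_laverage_cell μ f k

theorem lintegral_iSup_laverage_cell_rpow_le [Countable κ] [Countable ι] {μ : Measure X}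
    {f : X → ℝ≥0∞} {s : ℝ} (hs : 0 < s) {C : ℝ≥0∞}
    (h : ∀ S, ∫⁻ x, D.maximal μ S f x ^ s ∂μ ≤ C) :
    ∫⁻ x, (⨆ k, ⨍⁻ y in D.cell k x, f y ∂μ) ^ s ∂μ ≤ C := by
  have hmono : Monotone fun S x => D.maximal μ S f x ^ s := fun S T hST x =>
    ENNReal.rpow_le_rpow (biSup_mono fun _ hk => hST hk) hs.le
  have hsup (x : X) : (⨆ k, ⨍⁻ y in D.cell k x, f y ∂μ) ^ s = ⨆ S, D.maximal μ S f x ^ s := by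
    rw [iSup_eq_iSup_finset]
    exact (ENNReal.orderIsoRpow s hs).map_iSup _
  simp only [hsup]
  rw [lintegral_iSup_directed (fun S => ((measurable_maximal μ S f).pow_const s).aemeasurable)
    hmono.directed_le]
  exact iSup_le h

end Preorder

section LinearOrder

variable [LinearOrder κ] {D : NestedPartition κ X ι} [Countable ι] [MeasurableSingletonClass ι]

theorem measure_setOf_exists_cell_le {μ ρ : Measure X} (S : Finset κ) :
    μ {x | ∃ k ∈ S, μ (D.cell k x) ≤ ρ (D.cell k x)} ≤
      ρ {x | ∃ k ∈ S, μ (D.cell k x) ≤ ρ (D.cell k x)} := by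
  induction S using Finset.induction_on_max with
  | empty => simp
  | insert K S hS ih =>
    set E := {x | ∃ k ∈ S, μ (D.cell k x) ≤ ρ (D.cell k x)} with hE
    set A := {x | μ (D.cell K x) ≤ ρ (D.cell K x)} with hA
    have hES : (· ∈ E).FactorsThrough (D.label K) :=
      factorsThrough_setOf_exists_cell_le fun k hk => (hS k hk).le
    have hAES : (· ∈ A \ E).FactorsThrough (D.label K) := fun x y hxy => by
      simp only [hA, Set.mem_sdiff, Set.mem_ofPred_eq, cell_eq_cell hxy, (hES hxy).to_iff]
    have hcover : {x | ∃ k ∈ insert K S, μ (D.cell k x) ≤ ρ (D.cell k x)} = E ∪ A \ E := by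
      rw [Set.union_sdiff_self, Set.union_comm]
      ext x
      simp only [Finset.exists_mem_insert, Set.mem_ofPred_eq, Set.mem_union, hA, hE]
    have hAE : MeasurableSet (A \ E) := measurableSet_of_factorsThrough (D.measurable_label K) hAES
    rw [hcover, measure_union Set.disjoint_sdiff_right hAE,
      measure_union Set.disjoint_sdiff_right hAE]
    exact add_le_add ih (measure_le_of_forall_fiber_le (D.measurable_label K) hAES fun x hx => hx.1)

theorem lintegral_maximal_rpow_le {μ : Measure X} (hμ : ∀ k x, μ (D.cell k x) ≠ ∞) (S : Finset κ)
    {f : X → ℝ≥0∞} (hf : Measurable f) {s : ℝ} (hs : 1 < s) :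
    ∫⁻ x, D.maximal μ S f x ^ s ∂μ ≤
      ENNReal.ofReal (s / (s - 1)) * 2 ^ s * ∫⁻ x, f x ^ s ∂μ := by
  have hu : Measurable fun x => 2 * f x := hf.const_mul 2
  have hweak (t : ℝ) : ENNReal.ofReal t * μ {x | ENNReal.ofReal t < D.maximal μ S f x} ≤
      1 * upperPart μ (fun x => 2 * f x) (ENNReal.ofReal t) Set.univ := by
    set τ := ENNReal.ofReal t
    have hcell : ∀ k x, τ < ⨍⁻ y in D.cell k x, f y ∂μ →
        (τ • μ) (D.cell k x) ≤ upperPart μ (fun x => 2 * f x) τ (D.cell k x) := fun k x hτ => by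
      refine le_upperPart_of_two_mul_le hu (measurableSet_cell k x) ofReal_ne_top le_rfl (hμ k x) ?_
      rw [lintegral_const_mul _ hf]
      gcongr
      exact mul_measure_le_setLIntegral_of_lt_laverage hτ
    rw [one_mul]
    calc τ * μ {x | τ < D.maximal μ S f x}
        ≤ (τ • μ) {x | ∃ k ∈ S, (τ • μ) (D.cell k x) ≤
            upperPart μ (fun x => 2 * f x) τ (D.cell k x)} := by
          refine measure_mono (μ := τ • μ) fun x hx => ?_
          simp only [maximal, Set.mem_ofPred_eq, lt_iSup_iff] at hx
          obtain ⟨k, hk, hτ⟩ := hx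
          exact ⟨k, hk, hcell k x hτ⟩
      _ ≤ _ := (measure_setOf_exists_cell_le S).trans (measure_mono (Set.subset_univ _))
  calc ∫⁻ x, D.maximal μ S f x ^ s ∂μ
      ≤ ENNReal.ofReal (s / (s - 1)) * 1 * ∫⁻ x, (2 * f x) ^ s ∂μ :=
        lintegral_rpow_le_of_mul_measure_lt_le_upperPart (measurable_maximal μ S f).aemeasurable hu
          hs 1 hweak
    _ = ENNReal.ofReal (s / (s - 1)) * 2 ^ s * ∫⁻ x, f x ^ s ∂μ := by
        simp only [ENNReal.mul_rpow_of_nonneg _ _ (zero_le_one.trans hs.le)]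
        rw [lintegral_const_mul _ (hf.pow_const s), mul_one, mul_assoc]

end LinearOrder

section Product

variable {κ₁ κ₂ X₁ X₂ ι₁ ι₂ : Type*} [MeasurableSpace X₁] [MeasurableSpace X₂] [MeasurableSpace ι₁]
  [MeasurableSpace ι₂]

section Preorder

variable [Preorder κ₁] [Preorder κ₂]

/-- The bi-parameter family of rectangles formed from the parts of `D₁` and of `D₂`, ordered by
refinement in both variables. -/
def prod (D₁ : NestedPartition κ₁ X₁ ι₁) (D₂ : NestedPartition κ₂ X₂ ι₂) :
    NestedPartition (κ₁ × κ₂) (X₁ × X₂) (ι₁ × ι₂) where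
  label q x := (D₁.label q.1 x.1, D₂.label q.2 x.2)
  measurable_label q := ((D₁.measurable_label q.1).comp measurable_fst).prodMk
    ((D₂.measurable_label q.2).comp measurable_snd)
  factorsThrough_label _ _ hjk _ _ h := Prod.ext
    (D₁.factorsThrough_label hjk.1 (congrArg Prod.fst h))
    (D₂.factorsThrough_label hjk.2 (congrArg Prod.snd h))

/-- The one-parameter family of rectangles of `D₁.prod D₂` whose first side has scale `K`. -/
def strip (D₁ : NestedPartition κ₁ X₁ ι₁) (K : κ₁) (D₂ : NestedPartition κ₂ X₂ ι₂) :
    NestedPartition κ₂ (X₁ × X₂) (ι₁ × ι₂) where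
  label k := (D₁.prod D₂).label (K, k)
  measurable_label k := (D₁.prod D₂).measurable_label (K, k)
  factorsThrough_label _ _ hjk := (D₁.prod D₂).factorsThrough_label ⟨le_rfl, hjk⟩

/-- A rectangle condition of `A_∞` type along the second variable: a subset `F` filling half of the
`ν`-measure of the second side of a rectangle spans a proportion at least `B⁻¹` of its
`μ`-measure. -/
def IsFibrewiseAInfty (D₁ : NestedPartition κ₁ X₁ ι₁) (D₂ : NestedPartition κ₂ X₂ ι₂)
    (μ : Measure (X₁ × X₂)) (ν : Measure X₂) (B : ℝ≥0∞) : Prop :=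
  ∀ q x F, MeasurableSet F → F ⊆ D₂.cell q.2 x.2 → ν (D₂.cell q.2 x.2) ≤ 2 * ν F →
    μ ((D₁.prod D₂).cell q x) ≤ B * μ (D₁.cell q.1 x.1 ×ˢ F)

variable {D₁ : NestedPartition κ₁ X₁ ι₁} {D₂ : NestedPartition κ₂ X₂ ι₂}

theorem cell_prod (q : κ₁ × κ₂) (x : X₁ × X₂) :
    (D₁.prod D₂).cell q x = D₁.cell q.1 x.1 ×ˢ D₂.cell q.2 x.2 :=
  Set.ext fun _ => Prod.ext_iff

variable {μ : Measure (X₁ × X₂)} {ν : Measure X₂} {B : ℝ≥0∞} {f : X₁ × X₂ → ℝ≥0∞}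
  {U : Set (X₁ × X₂)} {τ : ℝ≥0∞} {K : κ₁} {q : κ₁ × κ₂}

theorem IsFibrewiseAInfty.measure_cell_le_mul_inter [MeasurableSingletonClass ι₂]
    (h : IsFibrewiseAInfty D₁ D₂ μ ν B)
    (hU : MeasurableSet U) {j : κ₁} (hjK : j ≤ K)
    (hUj : (· ∈ U).FactorsThrough (Prod.map (D₁.label j) id)) {l : κ₂} {x : X₁ × X₂}
    (hx : ν (D₂.cell l x.2) ≤ 2 * ν (D₂.cell l x.2 ∩ Prod.mk x.1 ⁻¹' U)) :
    ∀ y ∈ (D₁.prod D₂).cell (j, l) x,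
      μ ((D₁.prod D₂).cell (K, l) y) ≤ B * μ ((D₁.prod D₂).cell (K, l) y ∩ U) := by
  intro y hy
  obtain ⟨hy₁ : D₁.label j y.1 = D₁.label j x.1, hy₂ : D₂.label l y.2 = D₂.label l x.2⟩ :=
    Prod.ext_iff.1 hy
  have hcell : D₂.cell l y.2 = D₂.cell l x.2 := cell_eq_cell hy₂
  set F := D₂.cell l x.2 ∩ Prod.mk x.1 ⁻¹' U
  have hFm : MeasurableSet F := (measurableSet_cell l x.2).inter (measurable_prodMk_left hU)
  have hsub : D₁.cell K y.1 ×ˢ F ⊆ (D₁.prod D₂).cell (K, l) y ∩ U := by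
    rintro z ⟨hz₁, hz₂, hzU⟩
    refine ⟨by rw [cell_prod, hcell]; exact ⟨hz₁, hz₂⟩, ?_⟩
    have hz : D₁.label j z.1 = D₁.label j x.1 := (D₁.factorsThrough_label hjK hz₁).trans hy₁
    exact (hUj (a := (x.1, z.2)) (b := z) (Prod.ext hz.symm rfl)).mp hzU
  calc μ ((D₁.prod D₂).cell (K, l) y) ≤ B * μ (D₁.cell K y.1 ×ˢ F) :=
        h (K, l) y F hFm (hcell ▸ Set.inter_subset_left) (hcell ▸ hx)
    _ ≤ B * μ ((D₁.prod D₂).cell (K, l) y ∩ U) := by gcongr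

theorem IsFibrewiseAInfty.forall_cell_le_mul_inter_or_forall_cell_le_mul_sdiff
    [MeasurableSingletonClass ι₂]
    (h : IsFibrewiseAInfty D₁ D₂ μ ν B) (hU : MeasurableSet U) {j : κ₁} (hjK : j ≤ K)
    (hUj : (· ∈ U).FactorsThrough (Prod.map (D₁.label j) id)) (l : κ₂) (x : X₁ × X₂) :
    (∀ y ∈ (D₁.prod D₂).cell (j, l) x,
      μ ((D₁.prod D₂).cell (K, l) y) ≤ B * μ ((D₁.prod D₂).cell (K, l) y ∩ U)) ∨
    ∀ y ∈ (D₁.prod D₂).cell (j, l) x,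
      μ ((D₁.prod D₂).cell (K, l) y) ≤ B * μ ((D₁.prod D₂).cell (K, l) y \ U) := by
  set C := D₂.cell l x.2
  have hsplit : ν (C ∩ Prod.mk x.1 ⁻¹' U) + ν (C ∩ Prod.mk x.1 ⁻¹' Uᶜ) = ν C :=
    measure_inter_add_sdiff C (measurable_prodMk_left hU)
  rcases le_total (ν (C ∩ Prod.mk x.1 ⁻¹' Uᶜ)) (ν (C ∩ Prod.mk x.1 ⁻¹' U)) with hle | hle
  · refine .inl (h.measure_cell_le_mul_inter hU hjK hUj ?_)
    rw [← hsplit, two_mul]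
    gcongr
  · refine .inr (h.measure_cell_le_mul_inter hU.compl hjK (fun y z hyz => ?_) ?_)
    · exact congrArg Not (hUj hyz)
    · rw [← hsplit, two_mul]
      gcongr

/-- The union of the rectangles of scale `q` that the Córdoba–Fefferman selection adds to the union
`U` of those already selected: `f` has average above `τ` on them, and each of their slices of scale
`K` in the first variable has a proportion at least `B⁻¹` of its measure outside `U`. -/
def freshPart (D₁ : NestedPartition κ₁ X₁ ι₁) (D₂ : NestedPartition κ₂ X₂ ι₂)
    (μ : Measure (X₁ × X₂)) (B : ℝ≥0∞) (f : X₁ × X₂ → ℝ≥0∞) (τ : ℝ≥0∞) (K : κ₁)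
    (U : Set (X₁ × X₂)) (q : κ₁ × κ₂) : Set (X₁ × X₂) :=
  {x | τ < ⨍⁻ y in (D₁.prod D₂).cell q x, f y ∂μ ∧ ∀ y ∈ (D₁.prod D₂).cell q x,
    μ ((D₁.prod D₂).cell (K, q.2) y) ≤ B * μ ((D₁.prod D₂).cell (K, q.2) y \ U)}

theorem factorsThrough_freshPart :
    (· ∈ freshPart D₁ D₂ μ B f τ K U q).FactorsThrough ((D₁.prod D₂).label q) := fun x y hxy => by
  simp only [freshPart, Set.mem_ofPred_eq, cell_eq_cell hxy]

theorem IsFibrewiseAInfty.measure_cell_le_mul_inter_union_freshPart [MeasurableSingletonClass ι₂]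
    (h : IsFibrewiseAInfty D₁ D₂ μ ν B) (hU : MeasurableSet U) (hK : q.1 ≤ K)
    (hUq : (· ∈ U).FactorsThrough (Prod.map (D₁.label q.1) id)) {x : X₁ × X₂}
    (hx : τ < ⨍⁻ y in (D₁.prod D₂).cell q x, f y ∂μ) :
    μ ((D₁.prod D₂).cell (K, q.2) x) ≤
      B * μ ((D₁.prod D₂).cell (K, q.2) x ∩ (U ∪ freshPart D₁ D₂ μ B f τ K U q)) := by
  rcases h.forall_cell_le_mul_inter_or_forall_cell_le_mul_sdiff hU hK hUq q.2 x with hinter | hsdiff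
  · refine (hinter x rfl).trans ?_
    gcongr
    exact Set.subset_union_left
  · have hqK : q ≤ (K, q.2) := ⟨hK, le_rfl⟩
    have hfresh : (D₁.prod D₂).cell (K, q.2) x ⊆ freshPart D₁ D₂ μ B f τ K U q := fun y hy =>
      (factorsThrough_freshPart (cell_subset_cell hqK x hy)).mpr ⟨hx, hsdiff⟩
    refine (hsdiff x rfl).trans ?_
    gcongr
    exact fun y hy => ⟨hy.1, .inr (hfresh hy.1)⟩

end Preorder

section LinearOrder

variable [LinearOrder κ₁] [LinearOrder κ₂] {D₁ : NestedPartition κ₁ X₁ ι₁}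
  {D₂ : NestedPartition κ₂ X₂ ι₂} [Countable ι₁] [Countable ι₂] [MeasurableSingletonClass ι₁]
  [MeasurableSingletonClass ι₂] {μ : Measure (X₁ × X₂)} {ν : Measure X₂} {B : ℝ≥0∞}
  {f : X₁ × X₂ → ℝ≥0∞} {U : Set (X₁ × X₂)} {τ : ℝ≥0∞} {q : κ₁ × κ₂} {K : κ₁} {S : Finset κ₂}

theorem setLIntegral_cell_le_mul_setLIntegral_sdiff
    (hμ : ∀ q x, μ ((D₁.prod D₂).cell q x) ≠ ∞) (hU : MeasurableSet U)
    (hK : q.1 ≤ K) (hS : q.2 ∈ S) {x : X₁ × X₂}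
    (h : ∀ y ∈ (D₁.prod D₂).cell q x,
      μ ((D₁.prod D₂).cell (K, q.2) y) ≤ B * μ ((D₁.prod D₂).cell (K, q.2) y \ U)) :
    ∫⁻ y in (D₁.prod D₂).cell q x, f y ∂μ ≤
      B * ∫⁻ y in (D₁.prod D₂).cell q x \ U, (D₁.strip K D₂).maximal μ S f y ∂μ := by
  set g := (D₁.strip K D₂).maximal μ S f
  have hqK : q ≤ (K, q.2) := ⟨hK, le_rfl⟩
  have hR : MeasurableSet ((D₁.prod D₂).cell q x) := measurableSet_cell q x
  have hfactor : (· ∈ (D₁.prod D₂).cell q x).FactorsThrough ((D₁.prod D₂).label (K, q.2)) :=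
    fun y z hyz => congrArg (· = _) ((D₁.prod D₂).factorsThrough_label hqK hyz)
  have hslice : ∀ y ∈ (D₁.prod D₂).cell q x, μ.withDensity f ((D₁.prod D₂).cell (K, q.2) y) ≤
      (B • μ.withDensity g).restrict Uᶜ ((D₁.prod D₂).cell (K, q.2) y) := by
    intro y hy
    set Q := (D₁.prod D₂).cell (K, q.2) y with hQ
    have hQm : MeasurableSet Q := measurableSet_cell _ y
    rw [Measure.restrict_apply' hU.compl, Measure.smul_apply, withDensity_apply _ hQm,
      withDensity_apply _ (hQm.inter hU.compl), smul_eq_mul]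
    calc ∫⁻ z in Q, f z ∂μ = μ Q * ⨍⁻ z in Q, f z ∂μ := (measure_mul_setLAverage f (hμ _ y)).symm
      _ ≤ B * μ (Q \ U) * ⨍⁻ z in Q, f z ∂μ := by
          gcongr
          exact h y hy
      _ = B * ∫⁻ _ in Q \ U, ⨍⁻ z in Q, f z ∂μ ∂μ := by
          rw [setLIntegral_const, mul_comm (⨍⁻ z in Q, f z ∂μ), mul_assoc]
      _ ≤ B * ∫⁻ z in Q ∩ Uᶜ, g z ∂μ := by
          gcongr B * ?_
          refine setLIntegral_mono (measurable_maximal μ S f) fun z hz => ?_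
          rw [hQ, ← cell_eq_cell hz.1]
          exact le_biSup (fun k => ⨍⁻ y in (D₁.strip K D₂).cell k z, f y ∂μ) hS
  calc ∫⁻ y in (D₁.prod D₂).cell q x, f y ∂μ
      = μ.withDensity f ((D₁.prod D₂).cell q x) := (withDensity_apply _ hR).symm
    _ ≤ (B • μ.withDensity g).restrict Uᶜ ((D₁.prod D₂).cell q x) :=
        measure_le_of_forall_fiber_le ((D₁.prod D₂).measurable_label (K, q.2)) hfactor hslice
    _ = B * ∫⁻ y in (D₁.prod D₂).cell q x \ U, g y ∂μ := by
        rw [Measure.restrict_apply' hU.compl, Measure.smul_apply,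
          withDensity_apply _ (hR.inter hU.compl), smul_eq_mul, Set.sdiff_eq]

theorem mul_measure_freshPart_le (hμ : ∀ q x, μ ((D₁.prod D₂).cell q x) ≠ ∞)
    (hU : MeasurableSet U) (hτ : τ ≠ ∞) (hK : q.1 ≤ K) (hS : q.2 ∈ S) :
    τ * μ (freshPart D₁ D₂ μ B f τ K U q) ≤
      upperPart μ (fun x => 2 * (B * (D₁.strip K D₂).maximal μ S f x)) τ
        (freshPart D₁ D₂ μ B f τ K U q \ U) := by
  set u := fun x => 2 * (B * (D₁.strip K D₂).maximal μ S f x)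
  have hg : Measurable ((D₁.strip K D₂).maximal μ S f) := measurable_maximal μ S f
  have hu : Measurable u := (hg.const_mul B).const_mul 2
  rw [Set.sdiff_eq, ← Measure.restrict_apply' hU.compl]
  refine measure_le_of_forall_fiber_le (μ := τ • μ) ((D₁.prod D₂).measurable_label q)
    factorsThrough_freshPart fun x ⟨hτx, hx⟩ => ?_
  have hR : MeasurableSet ((D₁.prod D₂).cell q x) := measurableSet_cell q x
  rw [Measure.restrict_apply' hU.compl]
  refine le_upperPart_of_two_mul_le hu (hR.inter hU.compl) hτ (measure_mono Set.inter_subset_left)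
    (hμ q x) ?_
  calc 2 * (τ * μ ((D₁.prod D₂).cell q x))
      ≤ 2 * ∫⁻ y in (D₁.prod D₂).cell q x, f y ∂μ := by
        gcongr
        exact mul_measure_le_setLIntegral_of_lt_laverage hτx
    _ ≤ 2 * (B * ∫⁻ y in (D₁.prod D₂).cell q x \ U, (D₁.strip K D₂).maximal μ S f y ∂μ) := by
        gcongr
        exact setLIntegral_cell_le_mul_setLIntegral_sdiff hμ hU hK hS hx
    _ = ∫⁻ y in (D₁.prod D₂).cell q x ∩ Uᶜ, u y ∂μ := by
        rw [lintegral_const_mul _ (hg.const_mul B), lintegral_const_mul _ hg, Set.sdiff_eq]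

theorem IsFibrewiseAInfty.exists_selected_union (h : IsFibrewiseAInfty D₁ D₂ μ ν B)
    (hμ : ∀ q x, μ ((D₁.prod D₂).cell q x) ≠ ∞) (hτ : τ ≠ ∞)
    (L : Finset (κ₁ × κ₂)) (hK : ∀ q ∈ L, q.1 ≤ K) (hS : ∀ q ∈ L, q.2 ∈ S) :
    ∃ U, MeasurableSet U ∧
      (∀ k, (∀ q ∈ L, q.1 ≤ k) → (· ∈ U).FactorsThrough (Prod.map (D₁.label k) id)) ∧
      (∀ q ∈ L, ∀ x, τ < ⨍⁻ y in (D₁.prod D₂).cell q x, f y ∂μ →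
        μ ((D₁.prod D₂).cell (K, q.2) x) ≤ B * μ ((D₁.prod D₂).cell (K, q.2) x ∩ U)) ∧
      τ * μ U ≤ upperPart μ (fun x => 2 * (B * (D₁.strip K D₂).maximal μ S f x)) τ U := by
  induction L using Finset.induction_on_max_value (ι := κ₁ × κ₂) Prod.fst with
  | empty => exact ⟨∅, .empty, fun _ _ _ _ _ => rfl, by simp, by simp⟩
  | insert q L _ hmax ih =>
    rw [Finset.forall_mem_insert] at hK hS
    obtain ⟨U, hU, hUfactor, hUlarge, hUτ⟩ := ih hK.2 hS.2
    set u := fun x => 2 * (B * (D₁.strip K D₂).maximal μ S f x)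
    set N := freshPart D₁ D₂ μ B f τ K U q
    have hN : MeasurableSet N :=
      measurableSet_of_factorsThrough ((D₁.prod D₂).measurable_label q) factorsThrough_freshPart
    refine ⟨U ∪ N, hU.union hN, fun k hk x y hxy => ?_, ?_, ?_⟩
    · rw [Finset.forall_mem_insert] at hk
      have hxyq : (D₁.prod D₂).label q x = (D₁.prod D₂).label q y :=
        Prod.ext (D₁.factorsThrough_label hk.1 (Prod.ext_iff.1 hxy).1)
          (congrArg (D₂.label q.2) (Prod.ext_iff.1 hxy).2)
      exact congrArg₂ Or (hUfactor k hk.2 hxy) (factorsThrough_freshPart hxyq)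
    · refine Finset.forall_mem_insert .. |>.2 ⟨fun x =>
        h.measure_cell_le_mul_inter_union_freshPart hU hK.1 (hUfactor q.1 hmax),
        fun q' hq' x hx => (hUlarge q' hq' x hx).trans ?_⟩
      gcongr
      exact Set.subset_union_left
    · calc τ * μ (U ∪ N) ≤ τ * μ U + τ * μ N := by
            rw [← mul_add]
            gcongr
            exact measure_union_le U N
        _ ≤ upperPart μ u τ U + upperPart μ u τ (N \ U) :=
            add_le_add hUτ (mul_measure_freshPart_le hμ hU hτ hK.1 hS.1)
        _ = upperPart μ u τ (U ∪ N) := by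
            rw [← measure_union Set.disjoint_sdiff_right (hN.diff hU), Set.union_sdiff_self]

theorem IsFibrewiseAInfty.mul_measure_lt_maximal_le (h : IsFibrewiseAInfty D₁ D₂ μ ν B)
    (hμ : ∀ q x, μ ((D₁.prod D₂).cell q x) ≠ ∞) (hτ : τ ≠ ∞)
    (L : Finset (κ₁ × κ₂)) (hK : ∀ q ∈ L, q.1 ≤ K) (hS : ∀ q ∈ L, q.2 ∈ S) :
    τ * μ {x | τ < (D₁.prod D₂).maximal μ L f x} ≤
      B * upperPart μ (fun x => 2 * (B * (D₁.strip K D₂).maximal μ S f x)) τ Set.univ := by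
  obtain ⟨U, hU, -, hUlarge, hUτ⟩ := h.exists_selected_union hμ hτ L hK hS
  have hcover : {x | τ < (D₁.prod D₂).maximal μ L f x} ⊆
      {x | ∃ k ∈ S, μ ((D₁.strip K D₂).cell k x) ≤
        (B • μ.restrict U) ((D₁.strip K D₂).cell k x)} := fun x hx => by
    simp only [maximal, Set.mem_ofPred_eq, lt_iSup_iff] at hx
    obtain ⟨q, hq, hτx⟩ := hx
    refine ⟨q.2, hS q hq, ?_⟩
    rw [Measure.smul_apply, Measure.restrict_apply' hU]
    exact hUlarge q hq x hτx
  have hμU : μ {x | τ < (D₁.prod D₂).maximal μ L f x} ≤ B * μ U := calc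
    _ ≤ _ := measure_mono hcover
    _ ≤ _ := measure_setOf_exists_cell_le S
    _ ≤ (B • μ.restrict U) Set.univ := measure_mono (Set.subset_univ _)
    _ = B * μ U := by rw [Measure.smul_apply, Measure.restrict_apply_univ, smul_eq_mul]
  calc τ * μ {x | τ < (D₁.prod D₂).maximal μ L f x} ≤ τ * (B * μ U) := by gcongr
    _ = B * (τ * μ U) := mul_left_comm ..
    _ ≤ B * upperPart μ (fun x => 2 * (B * (D₁.strip K D₂).maximal μ S f x)) τ Set.univ := by
        gcongr
        exact hUτ.trans (measure_mono (Set.subset_univ U))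

theorem IsFibrewiseAInfty.lintegral_maximal_rpow_le [Nonempty κ₁]
    (h : IsFibrewiseAInfty D₁ D₂ μ ν B)
    (hμ : ∀ q x, μ ((D₁.prod D₂).cell q x) ≠ ∞) (hf : Measurable f) {s : ℝ} (hs : 1 < s)
    (L : Finset (κ₁ × κ₂)) :
    ∫⁻ x, (D₁.prod D₂).maximal μ L f x ^ s ∂μ ≤
      (ENNReal.ofReal (s / (s - 1)) * 2 ^ s) ^ 2 * B ^ (s + 1) * ∫⁻ x, f x ^ s ∂μ := by
  obtain ⟨K, hK⟩ := (L.image Prod.fst).exists_le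
  set S := L.image Prod.snd
  set g := (D₁.strip K D₂).maximal μ S f
  set c := ENNReal.ofReal (s / (s - 1))
  have hs0 : 0 ≤ s := zero_le_one.trans hs.le
  have hg : Measurable g := measurable_maximal μ S f
  have hB : B * B ^ s = B ^ (s + 1) := by
    rw [ENNReal.rpow_add_of_nonneg _ _ hs0 zero_le_one, ENNReal.rpow_one, mul_comm]
  calc ∫⁻ x, (D₁.prod D₂).maximal μ L f x ^ s ∂μ
      ≤ c * B * ∫⁻ x, (2 * (B * g x)) ^ s ∂μ :=
        lintegral_rpow_le_of_mul_measure_lt_le_upperPart (measurable_maximal μ L f).aemeasurable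
          ((hg.const_mul B).const_mul 2) hs B fun t => h.mul_measure_lt_maximal_le hμ
            ofReal_ne_top L (fun q hq => hK _ (Finset.mem_image_of_mem _ hq))
            fun q hq => Finset.mem_image_of_mem _ hq
    _ = c * 2 ^ s * B ^ (s + 1) * ∫⁻ x, g x ^ s ∂μ := by
        simp only [ENNReal.mul_rpow_of_nonneg _ _ hs0]
        rw [lintegral_const_mul _ ((hg.pow_const s).const_mul _),
          lintegral_const_mul _ (hg.pow_const s), ← hB]
        ring
    _ ≤ c * 2 ^ s * B ^ (s + 1) * (c * 2 ^ s * ∫⁻ x, f x ^ s ∂μ) := by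
        gcongr
        exact NestedPartition.lintegral_maximal_rpow_le (fun k x => hμ (K, k) x) S hf hs
    _ = (c * 2 ^ s) ^ 2 * B ^ (s + 1) * ∫⁻ x, f x ^ s ∂μ := by ring

theorem IsFibrewiseAInfty.lintegral_iSup_laverage_rpow_le [Nonempty κ₁] [Countable κ₁]
    [Countable κ₂] (h : IsFibrewiseAInfty D₁ D₂ μ ν B)
    (hμ : ∀ q x, μ ((D₁.prod D₂).cell q x) ≠ ∞) (hf : Measurable f) {s : ℝ} (hs : 1 < s) :
    ∫⁻ x, (⨆ q, ⨍⁻ y in (D₁.prod D₂).cell q x, f y ∂μ) ^ s ∂μ ≤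
      (ENNReal.ofReal (s / (s - 1)) * 2 ^ s) ^ 2 * B ^ (s + 1) * ∫⁻ x, f x ^ s ∂μ :=
  lintegral_iSup_laverage_cell_rpow_le (zero_lt_one.trans hs)
    (h.lintegral_maximal_rpow_le hμ hf hs)

end LinearOrder

end Product

end NestedPartition

section Weights

theorem measure_univ_rpow_le_lintegral_mul_lintegral_rpow {X : Type*} [MeasurableSpace X]
    {μ : Measure X} {p : ℝ} (hp : 1 < p) {w : X → ℝ} (hw : AEMeasurable w μ)
    (hpos : ∀ᵐ x ∂μ, 0 < w x) :
    μ Set.univ ^ p ≤ (∫⁻ x, ENNReal.ofReal (w x) ∂μ) *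
      (∫⁻ x, ENNReal.ofReal (w x ^ (-(1 / (p - 1)))) ∂μ) ^ (p - 1) := by
  have hp0 : 0 < p := zero_lt_one.trans hp
  have hp1 : p - 1 ≠ 0 := (sub_pos.2 hp).ne'
  have hone : ∫⁻ x, ENNReal.ofReal (w x) ^ (1 / p) * ENNReal.ofReal (w x) ^ (-(1 / p)) ∂μ =
      μ Set.univ := by
    rw [← lintegral_one]
    refine lintegral_congr_ae (hpos.mono fun x hx => ?_)
    dsimp only
    rw [← ENNReal.rpow_add _ _ (by simpa using hx) ofReal_ne_top, add_neg_cancel,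
      ENNReal.rpow_zero]
  have hdual : ∫⁻ x, (ENNReal.ofReal (w x) ^ (-(1 / p))) ^ Real.conjExponent p ∂μ =
      ∫⁻ x, ENNReal.ofReal (w x ^ (-(1 / (p - 1)))) ∂μ := by
    refine lintegral_congr_ae (hpos.mono fun x hx => ?_)
    dsimp only
    rw [← ENNReal.rpow_mul, ENNReal.ofReal_rpow_of_pos hx, Real.conjExponent]
    congr 2
    field_simp
  have hholder := ENNReal.lintegral_mul_le_Lp_mul_Lq μ (Real.HolderConjugate.conjExponent hp)
    (hw.ennreal_ofReal.pow_const (1 / p)) (hw.ennreal_ofReal.pow_const (-(1 / p)))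
  simp only [Pi.mul_apply, hone, hdual] at hholder
  simp only [← ENNReal.rpow_mul, one_div_mul_cancel hp0.ne', ENNReal.rpow_one] at hholder
  calc μ Set.univ ^ p
      ≤ ((∫⁻ x, ENNReal.ofReal (w x) ∂μ) ^ (1 / p) *
        (∫⁻ x, ENNReal.ofReal (w x ^ (-(1 / (p - 1)))) ∂μ) ^ (1 / Real.conjExponent p)) ^ p :=
        ENNReal.rpow_le_rpow hholder hp0.le
    _ = _ := by
        rw [ENNReal.mul_rpow_of_nonneg _ _ hp0.le, ← ENNReal.rpow_mul, ← ENNReal.rpow_mul,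
          one_div_mul_cancel hp0.ne', ENNReal.rpow_one, Real.conjExponent]
        congr 2
        field_simp

variable {X : Type*} [MeasureSpace X]

/-- The measure `w dx` with density the weight `w`. -/
noncomputable def weightMeasure (w : X → ℝ) : Measure X :=
  volume.withDensity fun x => ENNReal.ofReal (w x)

theorem weightMeasure_apply (w : X → ℝ) {R : Set X} (hR : MeasurableSet R) :
    weightMeasure w R = ∫⁻ x in R, ENNReal.ofReal (w x) :=
  withDensity_apply _ hR

theorem lintegral_weightMeasure {w : X → ℝ} (hw : Measurable w) (g : X → ℝ≥0∞) :
    ∫⁻ x, g x ∂weightMeasure w = ∫⁻ x, g x * ENNReal.ofReal (w x) := by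
  rw [weightMeasure, lintegral_withDensity_eq_lintegral_mul_non_measurable _ hw.ennreal_ofReal
    (.of_forall fun _ => ofReal_lt_top)]
  simp only [Pi.mul_apply, mul_comm]

theorem eNormW_eq_lintegral_weightMeasure {w : X → ℝ} (hw : Measurable w) (g : X → ℝ≥0∞) (s : ℝ) :
    eNormW g s w = (∫⁻ x, g x ^ s ∂weightMeasure w) ^ (1 / s) := by
  rw [eNormW, lintegral_weightMeasure hw]

theorem laverage_weightMeasure {w : X → ℝ} (hw : Measurable w) (f : X → ℝ) {R : Set X}
    (hR : MeasurableSet R) :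
    ⨍⁻ x in R, ENNReal.ofReal |f x| ∂weightMeasure w =
      (∫⁻ x in R, ENNReal.ofReal (|f x| * w x)) / ∫⁻ x in R, ENNReal.ofReal (w x) := by
  rw [setLAverage_eq, weightMeasure_apply w hR, weightMeasure,
    setLIntegral_withDensity_eq_setLIntegral_mul_non_measurable _ hw.ennreal_ofReal _ hR
      (.of_forall fun _ => ofReal_lt_top)]
  simp only [Pi.mul_apply, ENNReal.ofReal_mul (abs_nonneg _), mul_comm (ENNReal.ofReal |_|)]

variable {p : ℝ} {w : X → ℝ} {R : Set X}

theorem ArRatio_mul_volume_rpow (hp : 1 < p) (w : X → ℝ) (h0 : volume R ≠ 0) (ht : volume R ≠ ∞) :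
    ArRatio (ENNReal.ofReal p) R w * volume R ^ p = (∫⁻ x in R, ENNReal.ofReal (w x)) *
      (∫⁻ x in R, ENNReal.ofReal (w x ^ (-(1 / (p - 1))))) ^ (p - 1) := by
  have hp1 : 0 ≤ p - 1 := (sub_pos.2 hp).le
  have hp_ne : ENNReal.ofReal p ≠ 1 := by simpa using hp.ne'
  have hvol : volume R ^ p = volume R * volume R ^ (p - 1) := by
    rw [ENNReal.rpow_sub _ _ h0 ht, ENNReal.rpow_one, ENNReal.mul_div_cancel h0 ht]
  rw [ArRatio, if_neg hp_ne, ENNReal.toReal_ofReal (zero_lt_one.trans hp).le, avgE, avgE, hvol,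
    ENNReal.div_rpow_of_nonneg _ _ hp1, mul_mul_mul_comm, ENNReal.div_mul_cancel h0 ht,
    ENNReal.div_mul_cancel (by simp [h0, ht]) (by simp [h0, ht])]

theorem volume_rpow_mul_weightMeasure_le (hp : 1 < p) (hw : Measurable w)
    (hpos : ∀ᵐ x, 0 < w x) (hR : MeasurableSet R) (h0 : volume R ≠ 0) (ht : volume R ≠ ∞)
    {E : Set X} (hE : MeasurableSet E) (hER : E ⊆ R) :
    volume E ^ p * weightMeasure w R ≤
      ArRatio (ENNReal.ofReal p) R w * volume R ^ p * weightMeasure w E := by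
  have hholder := measure_univ_rpow_le_lintegral_mul_lintegral_rpow (μ := volume.restrict E) hp
    hw.aemeasurable (ae_restrict_of_ae hpos)
  rw [Measure.restrict_apply_univ] at hholder
  rw [ArRatio_mul_volume_rpow hp w h0 ht, weightMeasure_apply w hR, weightMeasure_apply w hE]
  calc _ ≤ (∫⁻ x in E, ENNReal.ofReal (w x)) *
        (∫⁻ x in R, ENNReal.ofReal (w x ^ (-(1 / (p - 1))))) ^ (p - 1) *
          ∫⁻ x in R, ENNReal.ofReal (w x) := by
        gcongr
        exact hholder.trans (by gcongr)
    _ = _ := by ring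

theorem weightMeasure_le_mul_of_volume_le_two_mul (hp : 1 < p) (hw : Measurable w)
    (hpos : ∀ᵐ x, 0 < w x) (hR : MeasurableSet R) (h0 : volume R ≠ 0) (ht : volume R ≠ ∞)
    {E : Set X} (hE : MeasurableSet E) (hER : E ⊆ R) (hvol : volume R ≤ 2 * volume E) :
    weightMeasure w R ≤ 2 ^ p * ArRatio (ENNReal.ofReal p) R w * weightMeasure w E := by
  have hp0 : 0 ≤ p := (zero_lt_one.trans hp).le
  refine (ENNReal.mul_le_mul_iff_right (a := volume R ^ p) (by simp [h0, ht])
    (by simp [h0, ht])).1 ?_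
  calc volume R ^ p * weightMeasure w R
      ≤ (2 * volume E) ^ p * weightMeasure w R := by gcongr
    _ = 2 ^ p * (volume E ^ p * weightMeasure w R) := by
        rw [ENNReal.mul_rpow_of_nonneg _ _ hp0, mul_assoc]
    _ ≤ 2 ^ p * (ArRatio (ENNReal.ofReal p) R w * volume R ^ p * weightMeasure w E) := by
        gcongr 2 ^ p * ?_
        exact volume_rpow_mul_weightMeasure_le hp hw hpos hR h0 ht hE hER
    _ = _ := by ring

theorem weightMeasure_ne_top_of_ArRatio_ne_top (hp : 1 < p) (hw : Measurable w)
    (hpos : ∀ᵐ x, 0 < w x) (hR : MeasurableSet R) (h0 : volume R ≠ 0) (ht : volume R ≠ ∞)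
    (hA : ArRatio (ENNReal.ofReal p) R w ≠ ∞) : weightMeasure w R ≠ ∞ := by
  have hp0 : 0 < p := zero_lt_one.trans hp
  have hholder := measure_univ_rpow_le_lintegral_mul_lintegral_rpow (μ := volume.restrict R) hp
    hw.aemeasurable (ae_restrict_of_ae hpos)
  rw [Measure.restrict_apply_univ] at hholder
  have hprod := ArRatio_mul_volume_rpow hp w h0 ht
  rw [weightMeasure_apply w hR]
  have hne_top := mul_ne_top hA (rpow_ne_top_of_nonneg hp0.le ht)
  refine (ENNReal.lt_top_of_mul_ne_top_left (hprod ▸ hne_top) fun hzero => ?_).ne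
  rw [hzero, mul_zero, nonpos_iff_eq_zero] at hholder
  exact h0 ((ENNReal.rpow_eq_zero_iff_of_pos hp0).1 hholder)

end Weights

section Dyadic

/-- The standard dyadic cubes of `ℝ ^ d`; the cubes of scale `k` have side `2 ^ (-k)`, and the label
of a cube is the integer vector `m` in `2 ^ (-k) ([0, 1) ^ d + m)`. -/
noncomputable def dyadicPartition (d : ℕ) : NestedPartition ℤ (Fin d → ℝ) (Fin d → ℤ) where
  label k x i := ⌊(2 : ℝ) ^ k * x i⌋
  measurable_label k := measurable_pi_lambda _ fun i =>
    Int.measurable_floor.comp (measurable_const.mul (measurable_pi_apply i))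
  factorsThrough_label j k hjk x y hxy := by
    obtain ⟨n, rfl⟩ := Int.le.dest hjk
    have hfloor : ∀ t : ℝ, ⌊(2 : ℝ) ^ j * t⌋ = ⌊(2 : ℝ) ^ (j + n) * t⌋ / (2 ^ n : ℕ) := fun t => by
      rw [← Int.floor_div_natCast, zpow_add₀ two_ne_zero, zpow_natCast]
      congr 1
      push_cast
      field_simp
    funext i
    have hi : ⌊(2 : ℝ) ^ (j + n) * x i⌋ = ⌊(2 : ℝ) ^ (j + n) * y i⌋ := congrFun hxy i
    simp only [hfloor, hi]

variable {d : ℕ}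

theorem dyadicPartition_label_preimage (k : ℤ) (m : Fin d → ℤ) :
    (dyadicPartition d).label k ⁻¹' {m} = Set.univ.pi fun i =>
      Set.Ico ((2 : ℝ) ^ (-k) * m i) ((2 : ℝ) ^ (-k) * (m i + 1)) := by
  have h2 : (0 : ℝ) < 2 ^ k := by positivity
  ext x
  simp only [dyadicPartition, Set.mem_preimage, Set.mem_singleton_iff, funext_iff,
    Int.floor_eq_iff, Set.mem_univ_pi, Set.mem_Ico, zpow_neg, inv_mul_le_iff₀ h2,
    lt_inv_mul_iff₀ h2]

theorem isDyadicCube_cell (k : ℤ) (x : Fin d → ℝ) :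
    IsDyadicCube ((dyadicPartition d).cell k x) :=
  ⟨k, (dyadicPartition d).label k x, dyadicPartition_label_preimage k _⟩

theorem IsDyadicCube.exists_eq_cell {I : Set (Fin d → ℝ)} (hI : IsDyadicCube I) :
    ∃ k, ∀ x ∈ I, I = (dyadicPartition d).cell k x := by
  obtain ⟨k, m, rfl⟩ := hI
  refine ⟨k, fun x hx => ?_⟩
  rw [← dyadicPartition_label_preimage] at hx ⊢
  exact congrArg (fun m => (dyadicPartition d).label k ⁻¹' {m}) hx.symm

theorem IsDyadicCube.isCube {I : Set (Fin d → ℝ)} (hI : IsDyadicCube I) : IsCube I := by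
  obtain ⟨k, m, rfl⟩ := hI
  refine ⟨fun i => (2 : ℝ) ^ (-k) * m i, (2 : ℝ) ^ (-k), by positivity, ?_⟩
  simp only [cubeOf, mul_add, mul_one]

theorem IsCube.volume_ne_zero {I : Set (Fin d → ℝ)} (hI : IsCube I) : volume I ≠ 0 := by
  obtain ⟨a, h, hh, rfl⟩ := hI
  simp [cubeOf, volume_pi_pi, hh]

theorem IsCube.volume_ne_top {I : Set (Fin d → ℝ)} (hI : IsCube I) : volume I ≠ ∞ := by
  obtain ⟨a, h, -, rfl⟩ := hI
  simp [cubeOf, volume_pi_pi]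

variable {d₁ d₂ : ℕ} {R : Set (Pt d₁ d₂)}

theorem IsRect.volume_ne_zero (hR : IsRect R) : volume R ≠ 0 := by
  obtain ⟨I₁, I₂, h₁, h₂, rfl⟩ := hR
  rw [Measure.volume_eq_prod, Measure.prod_prod]
  exact mul_ne_zero h₁.volume_ne_zero h₂.volume_ne_zero

theorem IsRect.volume_ne_top (hR : IsRect R) : volume R ≠ ∞ := by
  obtain ⟨I₁, I₂, h₁, h₂, rfl⟩ := hR
  rw [Measure.volume_eq_prod, Measure.prod_prod]
  exact mul_ne_top h₁.volume_ne_top h₂.volume_ne_top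

theorem IsDyadicRect.isRect (hR : IsDyadicRect R) : IsRect R := by
  obtain ⟨I₁, I₂, h₁, h₂, rfl⟩ := hR
  exact ⟨I₁, I₂, h₁.isCube, h₂.isCube, rfl⟩

theorem isDyadicRect_cell (q : ℤ × ℤ) (x : Pt d₁ d₂) :
    IsDyadicRect (((dyadicPartition d₁).prod (dyadicPartition d₂)).cell q x) :=
  ⟨_, _, isDyadicCube_cell q.1 x.1, isDyadicCube_cell q.2 x.2, NestedPartition.cell_prod q x⟩

theorem IsDyadicRect.exists_eq_cell (hR : IsDyadicRect R) :
    ∃ q, ∀ x ∈ R, R = ((dyadicPartition d₁).prod (dyadicPartition d₂)).cell q x := by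
  obtain ⟨I₁, I₂, h₁, h₂, rfl⟩ := hR
  obtain ⟨k₁, hk₁⟩ := h₁.exists_eq_cell
  obtain ⟨k₂, hk₂⟩ := h₂.exists_eq_cell
  refine ⟨(k₁, k₂), fun x hx => ?_⟩
  rw [NestedPartition.cell_prod, ← hk₁ x.1 hx.1, ← hk₂ x.2 hx.2]

theorem MDw_eq_iSup_laverage {lam : Pt d₁ d₂ → ℝ} (hlam : Measurable lam) (f : Pt d₁ d₂ → ℝ)
    (x : Pt d₁ d₂) :
    MDw lam f x = ⨆ q, ⨍⁻ y in ((dyadicPartition d₁).prod (dyadicPartition d₂)).cell q x,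
      ENNReal.ofReal |f y| ∂weightMeasure lam := by
  simp only [laverage_weightMeasure hlam f (NestedPartition.measurableSet_cell _ x)]
  refine le_antisymm (iSup_le fun R => iSup₂_le fun hR hx => ?_) (iSup_le fun q => ?_)
  · obtain ⟨q, hq⟩ := hR.exists_eq_cell
    rw [hq x hx]
    exact le_iSup_of_le q le_rfl
  · exact le_iSup_of_le _ (le_iSup₂_of_le (isDyadicRect_cell q x) rfl le_rfl)

/-- The `A_r` characteristic over the standard dyadic rectangles. -/
noncomputable def dyadicArRect (r : ℝ≥0∞) (v : Pt d₁ d₂ → ℝ) : ℝ≥0∞ :=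
  ⨆ (R : Set (Pt d₁ d₂)) (_ : IsDyadicRect R), ArRatio r R v

theorem dyadicArRect_le_ArRect (r : ℝ≥0∞) (v : Pt d₁ d₂ → ℝ) : dyadicArRect r v ≤ ArRect r v :=
  biSup_mono fun _ => IsDyadicRect.isRect

variable {p s : ℝ} {lam f : Pt d₁ d₂ → ℝ}

theorem isFibrewiseAInfty_dyadicPartition (hp : 1 < p) (hlam : Measurable lam)
    (hpos : ∀ᵐ x, 0 < lam x) :
    NestedPartition.IsFibrewiseAInfty (dyadicPartition d₁) (dyadicPartition d₂)
      (weightMeasure lam) volume (2 ^ p * dyadicArRect (ENNReal.ofReal p) lam) := by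
  intro q x F hF hFsub hvol
  have hR := isDyadicRect_cell q x
  set R := ((dyadicPartition d₁).prod (dyadicPartition d₂)).cell q x with hRdef
  have hvolR : volume R ≤ 2 * volume ((dyadicPartition d₁).cell q.1 x.1 ×ˢ F) := by
    rw [hRdef, NestedPartition.cell_prod, Measure.volume_eq_prod, Measure.prod_prod,
      Measure.prod_prod, mul_left_comm]
    gcongr
  have hER : (dyadicPartition d₁).cell q.1 x.1 ×ˢ F ⊆ R := by
    rw [hRdef, NestedPartition.cell_prod]
    gcongr
  refine (weightMeasure_le_mul_of_volume_le_two_mul hp hlam hpos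
    (NestedPartition.measurableSet_cell q x) hR.isRect.volume_ne_zero hR.isRect.volume_ne_top
    ((NestedPartition.measurableSet_cell q.1 x.1).prod hF) hER hvolR).trans ?_
  gcongr
  exact le_iSup₂_of_le R hR le_rfl

theorem IsDyadicRect.weightMeasure_ne_top (hR : IsDyadicRect R) (hRm : MeasurableSet R) (hp : 1 < p)
    (hlam : Measurable lam) (hpos : ∀ᵐ x, 0 < lam x)
    (hA : dyadicArRect (ENNReal.ofReal p) lam ≠ ∞) : weightMeasure lam R ≠ ∞ :=
  weightMeasure_ne_top_of_ArRatio_ne_top hp hlam hpos hRm hR.isRect.volume_ne_zero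
    hR.isRect.volume_ne_top (ne_top_of_le_ne_top hA (le_iSup₂_of_le R hR le_rfl))

theorem lintegral_MDw_rpow_le (hp : 1 < p) (hs : 1 < s) (hlam : Measurable lam)
    (hpos : ∀ᵐ x, 0 < lam x) (hA : dyadicArRect (ENNReal.ofReal p) lam ≠ ∞) (hf : Measurable f) :
    ∫⁻ x, MDw lam f x ^ s ∂weightMeasure lam ≤
      (ENNReal.ofReal (s / (s - 1)) * 2 ^ s) ^ 2 *
        (2 ^ p * dyadicArRect (ENNReal.ofReal p) lam) ^ (s + 1) *
        ∫⁻ x, ENNReal.ofReal |f x| ^ s ∂weightMeasure lam := by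
  simp only [MDw_eq_iSup_laverage hlam]
  exact (isFibrewiseAInfty_dyadicPartition hp hlam hpos).lintegral_iSup_laverage_rpow_le
    (fun q x => (isDyadicRect_cell q x).weightMeasure_ne_top
      (NestedPartition.measurableSet_cell q x) hp hlam hpos hA) hf.abs.ennreal_ofReal hs

theorem eNormW_MDw_le (hp : 1 < p) (hs : 1 < s) (hlam : Measurable lam)
    (hpos : ∀ᵐ x, 0 < lam x) (hA : dyadicArRect (ENNReal.ofReal p) lam ≠ ∞) (hf : Measurable f) :
    eNormW (MDw lam f) s lam ≤
      ((ENNReal.ofReal (s / (s - 1)) * 2 ^ s) ^ 2) ^ (1 / s) * (2 ^ p) ^ (1 + 1 / s) *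
        dyadicArRect (ENNReal.ofReal p) lam ^ (1 + 1 / s) *
        eNormW (fun x => ENNReal.ofReal |f x|) s lam := by
  have hs' : 0 ≤ 1 / s := by positivity
  have hexp : (s + 1) * (1 / s) = 1 + 1 / s := by field_simp
  rw [eNormW_eq_lintegral_weightMeasure hlam, eNormW_eq_lintegral_weightMeasure hlam]
  refine (ENNReal.rpow_le_rpow (lintegral_MDw_rpow_le hp hs hlam hpos hA hf) hs').trans_eq ?_
  rw [ENNReal.mul_rpow_of_nonneg _ _ hs', ENNReal.mul_rpow_of_nonneg _ _ hs', ← ENNReal.rpow_mul,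
    hexp, ENNReal.mul_rpow_of_nonneg _ _ (by positivity), ← mul_assoc]

end Dyadic

theorem statement11_general (p s : ℝ) (hp : 1 < p) (hs : 1 < s) :
    ∃ C : ℝ≥0∞, C < ∞ ∧ ∀ (d₁ d₂ : ℕ) (lam : Pt d₁ d₂ → ℝ), Measurable lam →
      (∀ᵐ x ∂(volume : Measure (Pt d₁ d₂)), 0 < lam x) →
      dyadicArRect (ENNReal.ofReal p) lam < ∞ →
      ∀ f : Pt d₁ d₂ → ℝ, Measurable f →
        eNormW (MDw lam f) s lam ≤ C * dyadicArRect (ENNReal.ofReal p) lam ^ (1 + 1 / s) *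
          eNormW (fun x => ENNReal.ofReal |f x|) s lam := by
  refine ⟨((ENNReal.ofReal (s / (s - 1)) * 2 ^ s) ^ 2) ^ (1 / s) * (2 ^ p) ^ (1 + 1 / s), ?_,
    fun d₁ d₂ lam hlam hpos hA f hf => eNormW_MDw_le hp hs hlam hpos hA.ne hf⟩
  finiteness

/-- Fefferman's weighted maximal function bound.
For `p, s ∈ (1,∞)` there is `C` depending only on `s`, `p` and the dimensions such that
for every bi-parameter `A_p` weight `λ`:
`‖M^λ_𝒟 f‖_{L^s(λ)} ≤ C [λ]_{A_p}^{1+1/s} ‖f‖_{L^s(λ)}`. -/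
theorem statement11 (d₁ d₂ : ℕ) (p s : ℝ) (hp : 1 < p) (hs : 1 < s) :
    ∃ C : ℝ≥0∞, C < ∞ ∧
      ∀ lam : Pt d₁ d₂ → ℝ, Measurable lam →
        (∀ᵐ x ∂(volume : Measure (Pt d₁ d₂)), 0 < lam x) →
        ArRect (ENNReal.ofReal p) lam < ∞ →
        ∀ f : Pt d₁ d₂ → ℝ, Measurable f →
          eNormW (MDw lam f) s lam
            ≤ C * ArRect (ENNReal.ofReal p) lam ^ (1 + 1 / s) *
                eNormW (fun x => ENNReal.ofReal |f x|) s lam := by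
  obtain ⟨C, hC, h⟩ := statement11_general p s hp hs
  exact ⟨C, hC, fun lam hlam hpos hA f hf =>
    (h d₁ d₂ lam hlam hpos ((dyadicArRect_le_ArRect _ lam).trans_lt hA) f hf).trans
      (by gcongr; exact dyadicArRect_le_ArRect _ lam)⟩
end

section
/- Reduction of the multilinear class to a weighted linear class: Let $1\le p_1,\ldots,p_n\le\infty$ with $1/p=\sum_{i=1}^n 1/p_i$, and let $w_1,\ldots,w_n$ be weights on $\mathbb{R}^{d_1}\times\mathbb{R}^{d_2}$. Let $\rho=(1+\sum_{i=1}^{n-1}1/p_i)^{-1}$ and suppose $w_i^{1/(n-1+1/p_i)}\in A_{n/(n-1+1/p_i)}$ for $1\le i\le n-1$ and $\widehat w:=(\prod_{i=1}^{n-1}w_i)^{\rho}\in A_{n\rho}$. Then $(w_1,\ldots,w_n)\in A_{\vec p}$ if and only if $W:=w_n\,\widehat w^{1/p_n'}\in A_{p_n,p}(\widehat w)$. -/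
open MeasureTheory ENNReal
open scoped Classical

/-!
Since `1/p + 1/p_{n+1}' = 1/ρ`, the powers of `⟨ŵ⟩_R` that normalise the two `ŵ`-weighted averages
in the `A_{p_{n+1}, p}(ŵ)` ratio of `W` combine to `⟨ŵ⟩_R^{1/ρ}`, so on every rectangle the
`A_{p⃗}` ratio is exactly the `A_{p_{n+1}, p}(ŵ)` ratio of `W` times
`H_R = ⟨ŵ⟩_R^{1/ρ} ∏_{i ≤ n} ⟨w_i^{-p_i'}⟩_R^{1/p_i'}`.

Hölder's inequality for the constant `∏ w_i · ∏ w_i⁻¹` gives `1 ≤ H_R`. Hölder's inequality for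
`(∏ w_i)⁻¹ · ∏ w_i`, with exponents `1/s = ∑ 1/p_i'` and `1/θ_i = n + 1/p_i`, supplies a factor at
least `1` whose norms pair up with those in `H_R` to powers of the `A_r` ratios of `ŵ` and of
`w_i^{θ_i}`, which are bounded by hypothesis.

All averages over `R` are `L^p` norms for the normalised measure `volume[|R]`, which treats the
essential supremum cases on the same footing.
-/

section eLpNorm

variable {α ι : Type*} [MeasurableSpace α] {μ : Measure α}

lemma eLpNorm_rpow_of_nonneg {f : α → ℝ} (hf : ∀ᵐ x ∂μ, 0 ≤ f x) {t : ℝ} (ht : 0 < t)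
    (p : ℝ≥0∞) : eLpNorm (fun x => f x ^ t) p μ = eLpNorm f (p * ENNReal.ofReal t) μ ^ t := by
  rw [← eLpNorm_norm_rpow f ht]
  refine eLpNorm_congr_ae ?_
  filter_upwards [hf] with x hx
  rw [Real.norm_of_nonneg hx]

lemma eLpNorm_ne_zero_of_pos [NeZero μ] {f : α → ℝ} (hfm : AEStronglyMeasurable f μ)
    (hf : ∀ᵐ x ∂μ, 0 < f x) {p : ℝ≥0∞} (hp : p ≠ 0) : eLpNorm f p μ ≠ 0 := by
  rw [ne_eq, eLpNorm_eq_zero_iff hfm hp]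
  intro hzero
  obtain ⟨x, hx, hpos⟩ := (hzero.and hf).exists
  exact hpos.ne' hx

lemma eLpNorm_mul_le_mul_eLpNorm {f g : α → ℝ} (hf : AEStronglyMeasurable f μ)
    (hg : AEStronglyMeasurable g μ) (a b : ℝ≥0∞) :
    eLpNorm (fun x => f x * g x) (a + b)⁻¹ μ ≤ eLpNorm f a⁻¹ μ * eLpNorm g b⁻¹ μ := by
  have : HolderTriple a⁻¹ b⁻¹ (a + b)⁻¹ := ⟨by simp⟩
  simpa using eLpNorm_le_eLpNorm_mul_eLpNorm_of_nnnorm (μ := μ) (p := a⁻¹) (q := b⁻¹)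
    (r := (a + b)⁻¹) hf hg (fun s t : ℝ => s * t) 1 (.of_forall fun x => by simp)

lemma eLpNorm_prod_le_prod_eLpNorm [IsProbabilityMeasure μ] {f : ι → α → ℝ}
    (hf : ∀ i, AEStronglyMeasurable (f i) μ) (a : ι → ℝ≥0∞) (s : Finset ι) :
    eLpNorm (fun x => ∏ i ∈ s, f i x) (∑ i ∈ s, a i)⁻¹ μ ≤ ∏ i ∈ s, eLpNorm (f i) (a i)⁻¹ μ := by
  induction s using Finset.induction_on with
  | empty =>
    simp only [Finset.prod_empty, Finset.sum_empty, ENNReal.inv_zero]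
    rw [eLpNorm_const _ top_ne_zero (NeZero.ne μ)]
    simp
  | insert i s hi ih =>
    simp only [Finset.prod_insert hi, Finset.sum_insert hi]
    calc _ ≤ eLpNorm (f i) (a i)⁻¹ μ * eLpNorm (fun x => ∏ j ∈ s, f j x) (∑ j ∈ s, a j)⁻¹ μ :=
          eLpNorm_mul_le_mul_eLpNorm (hf i) (Finset.aestronglyMeasurable_fun_prod _ fun j _ => hf j)
            _ _
      _ ≤ _ := by gcongr

lemma one_le_eLpNorm_mul_prod_eLpNorm [IsProbabilityMeasure μ] [Fintype ι] {f : ι → α → ℝ}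
    {g : α → ℝ} (hf : ∀ i, AEStronglyMeasurable (f i) μ) (hg : AEStronglyMeasurable g μ)
    {a : ι → ℝ≥0∞} {c : ℝ≥0∞} (ha : ∀ i, a i ≠ ∞) (hc : c ≠ ∞)
    (hone : ∀ᵐ x ∂μ, g x * ∏ i, f i x = 1) :
    1 ≤ eLpNorm g c⁻¹ μ * ∏ i, eLpNorm (f i) (a i)⁻¹ μ := by
  have hexp : (c + ∑ i, a i)⁻¹ ≠ 0 :=
    ENNReal.inv_ne_zero.2 (add_ne_top.2 ⟨hc, sum_ne_top.2 fun i _ => ha i⟩)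
  calc 1 = eLpNorm (fun x => g x * ∏ i, f i x) (c + ∑ i, a i)⁻¹ μ := by
        rw [eLpNorm_congr_ae hone, eLpNorm_const _ hexp (NeZero.ne μ)]
        simp
    _ ≤ eLpNorm g c⁻¹ μ * eLpNorm (fun x => ∏ i, f i x) (∑ i, a i)⁻¹ μ :=
        eLpNorm_mul_le_mul_eLpNorm hg (Finset.aestronglyMeasurable_fun_prod _ fun i _ => hf i) _ _
    _ ≤ _ := by
        gcongr
        exact eLpNorm_prod_le_prod_eLpNorm hf a _

end eLpNorm

section dualExp

variable {p : ℝ≥0∞}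

lemma inv_ne_top_of_one_le (hp : 1 ≤ p) : p⁻¹ ≠ ∞ :=
  ENNReal.inv_ne_top.2 (one_pos.trans_le hp).ne'

lemma holderConjugate_dualExp (hp : 1 ≤ p) : HolderConjugate p (dualExp p) := by
  unfold dualExp
  split_ifs with h1 htop
  · exact h1 ▸ HolderConjugate.one_top
  · exact htop ▸ HolderConjugate.top_one
  · have hlt : 1 < p.toReal := by
      simpa using (toReal_lt_toReal one_ne_top htop).2 (lt_of_le_of_ne hp (Ne.symm h1))
    simpa only [Real.conjExponent, ofReal_toReal htop] using
      (Real.HolderConjugate.conjExponent hlt).ennrealOfReal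

lemma inv_add_inv_dualExp (hp : 1 ≤ p) : p⁻¹ + (dualExp p)⁻¹ = 1 :=
  have := holderConjugate_dualExp hp
  HolderConjugate.inv_add_inv_eq_one p (dualExp p)

lemma inv_dualExp_ne_top (hp : 1 ≤ p) : (dualExp p)⁻¹ ≠ ∞ :=
  (add_ne_top.1 ((inv_add_inv_dualExp hp).trans_ne one_ne_top)).2

lemma dualExp_ne_zero (hp : 1 ≤ p) : dualExp p ≠ 0 :=
  ENNReal.inv_ne_top.1 (inv_dualExp_ne_top hp)

lemma dualExp_eq_top_iff : dualExp p = ∞ ↔ p = 1 := by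
  unfold dualExp
  split_ifs <;> simp_all

end dualExp

section averages

open ProbabilityTheory

variable {X : Type*} [MeasureSpace X] {R : Set X} {f g : X → ℝ}

lemma ae_cond_of_ae {P : X → Prop} (h : ∀ᵐ x, P x) : ∀ᵐ x ∂volume[|R], P x :=
  cond_absolutelyContinuous.ae_le h

lemma avgE_eq_lintegral_cond (R : Set X) (f : X → ℝ) :
    avgE R f = ∫⁻ x, ENNReal.ofReal (f x) ∂volume[|R] := by
  rw [ProbabilityTheory.cond, lintegral_smul_measure, smul_eq_mul, avgE, ENNReal.div_eq_inv_mul]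

lemma avgE_congr_ae (h : ∀ᵐ x, f x = g x) : avgE R f = avgE R g := by
  rw [avgE_eq_lintegral_cond, avgE_eq_lintegral_cond]
  refine lintegral_congr_ae ?_
  filter_upwards [ae_cond_of_ae h] with x hx
  rw [hx]

lemma essSupE_congr_ae (h : ∀ᵐ x, f x = g x) : essSupE R f = essSupE R g := by
  refine essSup_congr_ae ?_
  filter_upwards [ae_restrict_of_ae h] with x hx
  rw [hx]

lemma mainFactor_congr_ae (h : ∀ᵐ x, f x = g x) (p : ℝ≥0∞) :
    mainFactor R f p = mainFactor R g p := by
  unfold mainFactor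
  rw [essSupE_congr_ae h, avgE_congr_ae (h.mono fun x hx => by rw [hx])]

lemma avgE_eq_eLpNorm_one (hf : ∀ᵐ x, 0 ≤ f x) : avgE R f = eLpNorm f 1 volume[|R] := by
  rw [avgE_eq_lintegral_cond, eLpNorm_one_eq_lintegral_enorm]
  refine lintegral_congr_ae ?_
  filter_upwards [ae_cond_of_ae hf] with x hx
  rw [Real.enorm_eq_ofReal hx]

lemma essSupE_eq_eLpNorm_top (htop : volume R ≠ ∞) (hf : ∀ᵐ x, 0 ≤ f x) :
    essSupE R f = eLpNorm f ∞ volume[|R] := by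
  rw [eLpNorm_exponent_top, eLpNormEssSup, ProbabilityTheory.cond,
    essSup_ennreal_smul_measure (ENNReal.inv_ne_zero.2 htop), essSupE]
  refine essSup_congr_ae ?_
  filter_upwards [ae_restrict_of_ae hf] with x hx
  rw [Real.enorm_eq_ofReal hx]

lemma avgE_rpow_eq_eLpNorm_rpow (hf : ∀ᵐ x, 0 ≤ f x) {t : ℝ} (ht : 0 < t) :
    avgE R (fun x => f x ^ t) = eLpNorm f (ENNReal.ofReal t) volume[|R] ^ t := by
  rw [avgE_eq_eLpNorm_one (hf.mono fun x hx => Real.rpow_nonneg hx t),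
    eLpNorm_rpow_of_nonneg (ae_cond_of_ae hf) ht, one_mul]

lemma mainFactor_eq_eLpNorm (htop : volume R ≠ ∞) (hf : ∀ᵐ x, 0 ≤ f x) {p : ℝ≥0∞} (hp : p ≠ 0) :
    mainFactor R f p = eLpNorm f p volume[|R] := by
  unfold mainFactor
  split_ifs with h
  · rw [h, essSupE_eq_eLpNorm_top htop hf]
  · have hpos := toReal_pos hp h
    rw [avgE_rpow_eq_eLpNorm_rpow hf hpos, ofReal_toReal h, one_div, rpow_rpow_inv hpos.ne']

lemma dualFactor_eq_mainFactor_inv (hf : ∀ᵐ x, 0 ≤ f x) (p : ℝ≥0∞) :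
    dualFactor R f p = mainFactor R (fun x => (f x)⁻¹) (dualExp p) := by
  simp only [dualFactor, mainFactor, dualExp_eq_top_iff]
  congr 2
  refine avgE_congr_ae ?_
  filter_upwards [hf] with x hx
  rw [Real.rpow_neg hx, Real.inv_rpow hx]

lemma dualFactor_eq_eLpNorm_inv (htop : volume R ≠ ∞) (hf : ∀ᵐ x, 0 ≤ f x) {p : ℝ≥0∞}
    (hp : 1 ≤ p) : dualFactor R f p = eLpNorm (fun x => (f x)⁻¹) (dualExp p) volume[|R] := by
  rw [dualFactor_eq_mainFactor_inv hf, mainFactor_eq_eLpNorm htop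
    (hf.mono fun x hx => inv_nonneg.2 hx) (dualExp_ne_zero hp)]

lemma ArRatio_eq_eLpNorm_mul_eLpNorm (htop : volume R ≠ ∞) (hf : ∀ᵐ x, 0 ≤ f x) {r : ℝ≥0∞}
    (hr : 1 ≤ r) (hr_top : r ≠ ∞) :
    ArRatio r R f
      = eLpNorm f 1 volume[|R] * eLpNorm (fun x => (f x)⁻¹) (r - 1)⁻¹ volume[|R] := by
  have hexp : (r - 1)⁻¹ ≠ 0 := ENNReal.inv_ne_zero.2 (sub_ne_top hr_top)
  rw [← avgE_eq_eLpNorm_one hf,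
    ← mainFactor_eq_eLpNorm htop (hf.mono fun x hx => inv_nonneg.2 hx) hexp]
  have hr_one : (r - 1)⁻¹ = ∞ ↔ r = 1 := by
    rw [ENNReal.inv_eq_top, tsub_eq_zero_iff_le, hr.ge_iff_eq']
  have htoReal : ((r - 1)⁻¹).toReal = 1 / (r.toReal - 1) := by
    rw [toReal_inv, toReal_sub_of_le hr hr_top, toReal_one, one_div]
  simp only [ArRatio, mainFactor, hr_one, htoReal, one_div_one_div]
  split_ifs
  · rfl
  · congr 2
    refine avgE_congr_ae ?_
    filter_upwards [hf] with x hx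
    rw [Real.rpow_neg hx, Real.inv_rpow hx]

lemma eLpNorm_mul_eLpNorm_inv_eq_ArRatio_rpow (htop : volume R ≠ ∞) (hf : ∀ᵐ x, 0 ≤ f x)
    {s t r : ℝ≥0∞} (hs : s ≠ ∞) (ht : t ≠ ∞) (ht0 : t ≠ 0) (hr : r = (t + s) / t) :
    eLpNorm f t⁻¹ volume[|R] * eLpNorm (fun x => (f x)⁻¹) s⁻¹ volume[|R]
      = ArRatio r R (fun x => f x ^ t⁻¹.toReal) ^ t.toReal := by
  have hpos : 0 < t⁻¹.toReal := toReal_pos (ENNReal.inv_ne_zero.2 ht) (ENNReal.inv_ne_top.2 ht0)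
  have hr_sub : r = 1 + s / t := by rw [hr, ENNReal.add_div, ENNReal.div_self ht0 ht]
  have hs_div : s / t ≠ ∞ := ENNReal.div_ne_top hs ht0
  have hf_cond := ae_cond_of_ae (R := R) hf
  have hinv : ∀ᵐ x ∂volume[|R], (f x ^ t⁻¹.toReal)⁻¹ = (f x)⁻¹ ^ t⁻¹.toReal :=
    hf_cond.mono fun x hx => (Real.inv_rpow hx _).symm
  have hexp : (r - 1)⁻¹ * t⁻¹ = s⁻¹ := by
    rw [hr_sub, ENNReal.add_sub_cancel_left one_ne_top, ENNReal.inv_div (.inl ht) (.inl ht0),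
      ENNReal.div_eq_inv_mul, mul_assoc, ENNReal.mul_inv_cancel ht0 ht, mul_one]
  rw [ArRatio_eq_eLpNorm_mul_eLpNorm htop (hf.mono fun x hx => Real.rpow_nonneg hx _)
      (hr_sub ▸ le_self_add) (hr_sub ▸ add_ne_top.2 ⟨one_ne_top, hs_div⟩),
    eLpNorm_congr_ae hinv, eLpNorm_rpow_of_nonneg hf_cond hpos,
    eLpNorm_rpow_of_nonneg (hf_cond.mono fun x hx => inv_nonneg.2 hx) hpos,
    ofReal_toReal (ENNReal.inv_ne_top.2 ht0), one_mul, hexp, ← mul_rpow_of_nonneg _ _ hpos.le,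
    toReal_inv, rpow_inv_rpow (toReal_pos ht0 ht).ne']

lemma avgE_rpow_ne_top_of_ArRatio_ne_top (h0 : volume R ≠ 0) (htop : volume R ≠ ∞)
    (hfm : AEMeasurable f) (hf : ∀ᵐ x, 0 < f x) {s t r : ℝ≥0∞} (hs : s ≠ ∞) (ht : t ≠ ∞)
    (ht0 : t ≠ 0) (hr : r = (t + s) / t) (hA : ArRatio r R (fun x => f x ^ t⁻¹.toReal) ≠ ∞) :
    avgE R (fun x => f x ^ t⁻¹.toReal) ≠ ∞ := by
  have := cond_isProbabilityMeasure_of_finite h0 htop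
  have hf_nonneg : ∀ᵐ x, 0 ≤ f x := hf.mono fun _ => le_of_lt
  have hinv_ne_zero : eLpNorm (fun x => (f x)⁻¹) s⁻¹ volume[|R] ≠ 0 :=
    eLpNorm_ne_zero_of_pos (hfm.inv.aestronglyMeasurable.mono_ac cond_absolutelyContinuous)
      (ae_cond_of_ae (hf.mono fun x hx => inv_pos.2 hx))
      (ENNReal.inv_ne_zero.2 hs)
  have hprod : eLpNorm f t⁻¹ volume[|R] * eLpNorm (fun x => (f x)⁻¹) s⁻¹ volume[|R] ≠ ∞ :=
    eLpNorm_mul_eLpNorm_inv_eq_ArRatio_rpow htop hf_nonneg hs ht ht0 hr ▸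
      rpow_ne_top_of_nonneg toReal_nonneg hA
  rw [avgE_rpow_eq_eLpNorm_rpow hf_nonneg
    (toReal_pos (ENNReal.inv_ne_zero.2 ht) (ENNReal.inv_ne_top.2 ht0)),
    ofReal_toReal (ENNReal.inv_ne_top.2 ht0)]
  exact rpow_ne_top_of_nonneg toReal_nonneg fun h => hprod (by rw [h, top_mul hinv_ne_zero])

lemma avgE_ne_zero (h0 : volume R ≠ 0) (htop : volume R ≠ ∞) (hfm : AEMeasurable f)
    (hf : ∀ᵐ x, 0 < f x) : avgE R f ≠ 0 := by
  have := cond_isProbabilityMeasure_of_finite h0 htop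
  rw [avgE_eq_eLpNorm_one (hf.mono fun _ => le_of_lt)]
  exact eLpNorm_ne_zero_of_pos (hfm.aestronglyMeasurable.mono_ac cond_absolutelyContinuous)
    (ae_cond_of_ae hf) one_ne_zero

end averages

section weightedAverages

variable {X : Type*} [MeasureSpace X] {R : Set X} {u v : X → ℝ}

/-- The factor `(μ(R)⁻¹ ∫_R V^q μ)^{1/q}` of the `A_{q_n,q}(μ)` ratio, `ess sup_R V` at `q = ∞`. -/
noncomputable def wMainFactor (R : Set X) (μ V : X → ℝ) (q : ℝ≥0∞) : ℝ≥0∞ :=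
  if q = ∞ then essSupE R V else (wAvg R μ fun x => V x ^ q.toReal) ^ (1 / q.toReal)

/-- The factor `(μ(R)⁻¹ ∫_R V^{-p'} μ)^{1/p'}` of the `A_{p,q}(μ)` ratio, `ess sup_R V⁻¹` at
`p = 1`. -/
noncomputable def wDualFactor (R : Set X) (μ V : X → ℝ) (p : ℝ≥0∞) : ℝ≥0∞ :=
  if p = 1 then essSupE R (fun x => (V x)⁻¹)
  else (wAvg R μ fun x => V x ^ (-(dualExp p).toReal)) ^ (1 / (dualExp p).toReal)

lemma wAvg_mul_avgE (htop : volume R ≠ ∞) (hv0 : avgE R v ≠ 0) (hv_top : avgE R v ≠ ∞)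
    (hu : ∀ᵐ x, 0 ≤ u x) : wAvg R v u * avgE R v = avgE R (fun x => u x * v x) := by
  have hint0 : ∫⁻ x in R, ENNReal.ofReal (v x) ≠ 0 := fun h => hv0 (by simp [avgE, h])
  have hint_top : ∫⁻ x in R, ENNReal.ofReal (v x) ≠ ∞ :=
    fun h => hv_top (by rw [avgE, h, top_div_of_ne_top htop])
  have hmul : ∫⁻ x in R, ENNReal.ofReal (u x) * ENNReal.ofReal (v x)
      = ∫⁻ x in R, ENNReal.ofReal (u x * v x) :=
    lintegral_congr_ae ((ae_restrict_of_ae hu).mono fun x hx => (ofReal_mul hx).symm)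
  rw [wAvg, avgE, avgE, hmul, ← mul_div_assoc, ENNReal.div_mul_cancel hint0 hint_top]

lemma wMainFactor_mul_avgE_rpow (htop : volume R ≠ ∞) (hu : ∀ᵐ x, 0 < u x) (hv : ∀ᵐ x, 0 < v x)
    (hv0 : avgE R v ≠ 0) (hv_top : avgE R v ≠ ∞) {q : ℝ≥0∞} (hq : q ≠ 0) (a : ℝ) :
    wMainFactor R v (fun x => u x * v x ^ a) q * avgE R v ^ (1 / q.toReal)
      = mainFactor R (fun x => u x * v x ^ (a + 1 / q.toReal)) q := by
  unfold wMainFactor mainFactor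
  split_ifs with hq_top
  · simp [hq_top]
  · have hpos := toReal_pos hq hq_top
    rw [← mul_rpow_of_nonneg _ _ (by positivity), wAvg_mul_avgE htop hv0 hv_top]
    · congr 1
      refine avgE_congr_ae ?_
      filter_upwards [hu, hv] with x hux hvx
      rw [Real.mul_rpow hux.le (by positivity), Real.mul_rpow hux.le (by positivity),
        ← Real.rpow_mul hvx.le, ← Real.rpow_mul hvx.le, add_mul, one_div_mul_cancel hpos.ne',
        Real.rpow_add_one hvx.ne', mul_assoc]
    · filter_upwards [hu, hv] with x hux hvx
      positivity

lemma wDualFactor_mul_avgE_rpow (htop : volume R ≠ ∞) (hu : ∀ᵐ x, 0 < u x) (hv : ∀ᵐ x, 0 < v x)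
    (hv0 : avgE R v ≠ 0) (hv_top : avgE R v ≠ ∞) {p : ℝ≥0∞} (hp : 1 ≤ p) :
    wDualFactor R v (fun x => u x * v x ^ (1 / (dualExp p).toReal)) p
        * avgE R v ^ (1 / (dualExp p).toReal)
      = dualFactor R u p := by
  unfold wDualFactor dualFactor
  split_ifs with hp_one
  · simp [dualExp, hp_one]
  · have hpos : 0 < (dualExp p).toReal :=
      toReal_pos (dualExp_ne_zero hp) (dualExp_eq_top_iff.not.2 hp_one)
    rw [← mul_rpow_of_nonneg _ _ (by positivity), wAvg_mul_avgE htop hv0 hv_top]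
    · congr 1
      refine avgE_congr_ae ?_
      filter_upwards [hu, hv] with x hux hvx
      rw [Real.mul_rpow hux.le (by positivity), ← Real.rpow_mul hvx.le, mul_neg,
        one_div_mul_cancel hpos.ne', Real.rpow_neg_one, inv_mul_cancel_right₀ hvx.ne']
    · filter_upwards [hu, hv] with x hux hvx
      positivity

lemma AqRatio_mul_avgE_rpow (htop : volume R ≠ ∞) (hu : ∀ᵐ x, 0 < u x) (hv : ∀ᵐ x, 0 < v x)
    (hv0 : avgE R v ≠ 0) (hv_top : avgE R v ≠ ∞) {p q : ℝ≥0∞} (hp : 1 ≤ p) (hq : q ≠ 0) :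
    AqRatio p q v (fun x => u x * v x ^ (1 / (dualExp p).toReal)) R
        * avgE R v ^ (1 / (dualExp p).toReal + 1 / q.toReal)
      = mainFactor R (fun x => u x * v x ^ (1 / (dualExp p).toReal + 1 / q.toReal)) q
        * dualFactor R u p := by
  rw [← wMainFactor_mul_avgE_rpow htop hu hv hv0 hv_top hq,
    ← wDualFactor_mul_avgE_rpow htop hu hv hv0 hv_top hp, rpow_add _ _ hv0 hv_top,
    mul_comm (avgE R v ^ _), mul_mul_mul_comm]
  rfl

end weightedAverages

section reduction

open ProbabilityTheory

variable {X : Type*} [MeasureSpace X] {R : Set X} {n : ℕ}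

/-- The exponent `ρ = (1 + ∑ i, 1/p_i)⁻¹`. -/
noncomputable def hatExp (p : Fin n → ℝ≥0∞) : ℝ≥0∞ := (1 + ∑ i, (p i)⁻¹)⁻¹

/-- The weight `ŵ = (∏ i, w_i)^ρ`. -/
noncomputable def hatWeight (p : Fin n → ℝ≥0∞) (w : Fin n → X → ℝ) (x : X) : ℝ :=
  (∏ i, w i x) ^ (hatExp p).toReal

/-- The ratio `⟨ŵ⟩_R^{1/ρ} ∏_i ⟨w_i^{-p_i'}⟩_R^{1/p_i'}`. It is the `A_{(p_1,…,p_n,1)}` ratio of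
`(w_1,…,w_n,1)`, and it measures the discrepancy between the multilinear and the weighted linear
ratio. -/
noncomputable def hatRatio (p : Fin n → ℝ≥0∞) (w : Fin n → X → ℝ) (R : Set X) : ℝ≥0∞ :=
  mainFactor R (fun x => ∏ i, w i x) (hatExp p) * ∏ i, dualFactor R (w i) (p i)

lemma one_add_sum_inv_ne_top {p : Fin n → ℝ≥0∞} (hp : ∀ i, 1 ≤ p i) : 1 + ∑ i, (p i)⁻¹ ≠ ∞ :=
  add_ne_top.2 ⟨one_ne_top, sum_ne_top.2 fun i _ => inv_ne_top_of_one_le (hp i)⟩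

lemma natCast_add_inv_ne_top (n : ℕ) {p : ℝ≥0∞} (hp : 1 ≤ p) : (n : ℝ≥0∞) + p⁻¹ ≠ ∞ :=
  add_ne_top.2 ⟨natCast_ne_top n, inv_ne_top_of_one_le hp⟩

lemma hatExp_ne_zero {p : Fin n → ℝ≥0∞} (hp : ∀ i, 1 ≤ p i) : hatExp p ≠ 0 :=
  ENNReal.inv_ne_zero.2 (one_add_sum_inv_ne_top hp)

lemma hatExp_ne_top (p : Fin n → ℝ≥0∞) : hatExp p ≠ ∞ :=
  ENNReal.inv_ne_top.2 (by simp)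

lemma sum_inv_dualExp_ne_top {p : Fin n → ℝ≥0∞} (hp : ∀ i, 1 ≤ p i) :
    ∑ i, (dualExp (p i))⁻¹ ≠ ∞ :=
  sum_ne_top.2 fun i _ => inv_dualExp_ne_top (hp i)

lemma one_add_sum_inv_add_sum_inv_dualExp {p : Fin n → ℝ≥0∞} (hp : ∀ i, 1 ≤ p i) :
    (1 + ∑ i, (p i)⁻¹) + ∑ i, (dualExp (p i))⁻¹ = n + 1 := by
  rw [add_assoc, ← Finset.sum_add_distrib,
    Finset.sum_congr rfl fun i _ => inv_add_inv_dualExp (hp i)]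
  simp [add_comm]

lemma add_one_mul_hatExp_eq_div {p : Fin n → ℝ≥0∞} (hp : ∀ i, 1 ≤ p i) :
    ((n : ℝ≥0∞) + 1) * hatExp p
      = ((1 + ∑ i, (p i)⁻¹) + ∑ i, (dualExp (p i))⁻¹) / (1 + ∑ i, (p i)⁻¹) := by
  rw [one_add_sum_inv_add_sum_inv_dualExp hp, hatExp, div_eq_mul_inv]

lemma ae_prod_pos {ι : Type*} [Fintype ι] {w : ι → X → ℝ} (hw : ∀ i, ∀ᵐ x, 0 < w i x) :
    ∀ᵐ x, 0 < ∏ i, w i x := by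
  filter_upwards [ae_all_iff.2 hw] with x hx
  exact Finset.prod_pos fun i _ => hx i

lemma ae_prod_nonneg {ι : Type*} [Fintype ι] {w : ι → X → ℝ} (hw : ∀ i, ∀ᵐ x, 0 ≤ w i x) :
    ∀ᵐ x, 0 ≤ ∏ i, w i x := by
  filter_upwards [ae_all_iff.2 hw] with x hx
  exact Finset.prod_nonneg fun i _ => hx i

lemma ae_hatWeight_pos (p : Fin n → ℝ≥0∞) {w : Fin n → X → ℝ} (hw : ∀ i, ∀ᵐ x, 0 < w i x) :
    ∀ᵐ x, 0 < hatWeight p w x :=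
  (ae_prod_pos hw).mono fun _ hx => Real.rpow_pos_of_pos hx _

lemma aemeasurable_hatWeight (p : Fin n → ℝ≥0∞) {w : Fin n → X → ℝ}
    (hwm : ∀ i, AEMeasurable (w i)) : AEMeasurable (hatWeight p w) :=
  (Finset.aemeasurable_fun_prod _ fun i _ => hwm i).pow_const _

lemma hatRatio_eq_eLpNorm_mul_prod (htop : volume R ≠ ∞) {p : Fin n → ℝ≥0∞} (hp : ∀ i, 1 ≤ p i)
    {w : Fin n → X → ℝ} (hw : ∀ i, ∀ᵐ x, 0 ≤ w i x) :
    hatRatio p w R = eLpNorm (fun x => ∏ i, w i x) (1 + ∑ i, (p i)⁻¹)⁻¹ volume[|R]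
      * ∏ i, eLpNorm (fun x => (w i x)⁻¹) ((dualExp (p i))⁻¹)⁻¹ volume[|R] := by
  rw [hatRatio, mainFactor_eq_eLpNorm htop (ae_prod_nonneg hw) (hatExp_ne_zero hp)]
  simp only [inv_inv, dualFactor_eq_eLpNorm_inv htop (hw _) (hp _)]
  rfl

section hatRatio

variable {p : Fin n → ℝ≥0∞} {w : Fin n → X → ℝ} (h0 : volume R ≠ 0) (htop : volume R ≠ ∞)
  (hp : ∀ i, 1 ≤ p i) (hwm : ∀ i, AEMeasurable (w i)) (hw : ∀ i, ∀ᵐ x, 0 < w i x)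

include h0 htop hp hwm hw

lemma avgE_hatWeight_ne_top
    (hhat : ArRatio (((n : ℝ≥0∞) + 1) * hatExp p) R (hatWeight p w) ≠ ∞) :
    avgE R (hatWeight p w) ≠ ∞ :=
  avgE_rpow_ne_top_of_ArRatio_ne_top h0 htop (Finset.aemeasurable_fun_prod _ fun i _ => hwm i)
    (ae_prod_pos hw) (sum_inv_dualExp_ne_top hp) (one_add_sum_inv_ne_top hp) (by simp)
    (add_one_mul_hatExp_eq_div hp) hhat

lemma one_le_hatRatio : 1 ≤ hatRatio p w R := by
  have := cond_isProbabilityMeasure_of_finite h0 htop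
  have hwm_cond := fun i => (hwm i).mono_ac (cond_absolutelyContinuous (s := R))
  rw [hatRatio_eq_eLpNorm_mul_prod htop hp fun i => (hw i).mono fun _ => le_of_lt]
  refine one_le_eLpNorm_mul_prod_eLpNorm (fun i => (hwm_cond i).inv.aestronglyMeasurable)
    (Finset.aemeasurable_fun_prod _ fun i _ => hwm_cond i).aestronglyMeasurable
    (fun i => inv_dualExp_ne_top (hp i)) (one_add_sum_inv_ne_top hp) ?_
  filter_upwards [ae_cond_of_ae (ae_prod_pos hw)] with x hx
  simp only [Pi.inv_apply, Finset.prod_inv_distrib, mul_inv_cancel₀ hx.ne']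

lemma one_le_eLpNorm_inv_prod_mul_prod_eLpNorm :
    1 ≤ eLpNorm (fun x => (∏ i, w i x)⁻¹) (∑ i, (dualExp (p i))⁻¹)⁻¹ volume[|R]
      * ∏ i, eLpNorm (w i) ((n : ℝ≥0∞) + (p i)⁻¹)⁻¹ volume[|R] := by
  have := cond_isProbabilityMeasure_of_finite h0 htop
  have hwm_cond := fun i => (hwm i).mono_ac (cond_absolutelyContinuous (s := R))
  refine one_le_eLpNorm_mul_prod_eLpNorm (fun i => (hwm_cond i).aestronglyMeasurable)
    (Finset.aemeasurable_fun_prod _ fun i _ => hwm_cond i).inv.aestronglyMeasurable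
    (fun i => natCast_add_inv_ne_top n (hp i)) (sum_inv_dualExp_ne_top hp) ?_
  filter_upwards [ae_cond_of_ae (ae_prod_pos hw)] with x hx
  exact inv_mul_cancel₀ hx.ne'

lemma hatRatio_le_ArRatio_rpow_mul_prod :
    hatRatio p w R ≤
      ArRatio (((n : ℝ≥0∞) + 1) * hatExp p) R (hatWeight p w) ^ (1 + ∑ i, (p i)⁻¹).toReal
      * ∏ i, ArRatio (((n : ℝ≥0∞) + 1) / ((n : ℝ≥0∞) + (p i)⁻¹)) R
          (fun x => w i x ^ (((n : ℝ≥0∞) + (p i)⁻¹)⁻¹).toReal)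
          ^ ((n : ℝ≥0∞) + (p i)⁻¹).toReal := by
  have hw_nonneg (i) : ∀ᵐ x, 0 ≤ w i x := (hw i).mono fun _ => le_of_lt
  have hexp0 (i : Fin n) : (n : ℝ≥0∞) + (p i)⁻¹ ≠ 0 := by simp [i.pos.ne']
  have hhat := eLpNorm_mul_eLpNorm_inv_eq_ArRatio_rpow htop (ae_prod_nonneg hw_nonneg)
    (sum_inv_dualExp_ne_top hp) (one_add_sum_inv_ne_top hp) (by simp) (add_one_mul_hatExp_eq_div hp)
  have hlin (i) := eLpNorm_mul_eLpNorm_inv_eq_ArRatio_rpow (r := (n + 1) / (n + (p i)⁻¹)) htop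
    (hw_nonneg i) (inv_dualExp_ne_top (hp i)) (natCast_add_inv_ne_top n (hp i)) (hexp0 i)
    (by rw [add_assoc, inv_add_inv_dualExp (hp i)])
  calc hatRatio p w R ≤ hatRatio p w R * _ := le_mul_of_one_le_right'
        (one_le_eLpNorm_inv_prod_mul_prod_eLpNorm h0 htop hp hwm hw)
    _ = (eLpNorm (fun x => ∏ i, w i x) (1 + ∑ i, (p i)⁻¹)⁻¹ volume[|R]
          * eLpNorm (fun x => (∏ i, w i x)⁻¹) (∑ i, (dualExp (p i))⁻¹)⁻¹ volume[|R])
        * ∏ i, (eLpNorm (w i) ((n : ℝ≥0∞) + (p i)⁻¹)⁻¹ volume[|R]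
          * eLpNorm (fun x => (w i x)⁻¹) ((dualExp (p i))⁻¹)⁻¹ volume[|R]) := by
        rw [hatRatio_eq_eLpNorm_mul_prod htop hp hw_nonneg, Finset.prod_mul_distrib,
          mul_mul_mul_comm, mul_comm (∏ i, eLpNorm (w i) _ _)]
    _ = _ := by
        rw [hhat, Finset.prod_congr rfl fun i _ => hlin i]
        rfl

end hatRatio

lemma one_div_dualExp_last_add_one_div {p : Fin (n + 1) → ℝ≥0∞} (hp : ∀ i, 1 ≤ p i) :
    1 / (dualExp (p (Fin.last n))).toReal + 1 / ((∑ i, (p i)⁻¹)⁻¹).toReal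
      = 1 / (hatExp (Fin.init p)).toReal := by
  have hsum_top : ∑ i, (p i)⁻¹ ≠ ∞ := sum_ne_top.2 fun i _ => inv_ne_top_of_one_le (hp i)
  simp only [hatExp, one_div, ← toReal_inv, inv_inv]
  rw [← toReal_add (inv_dualExp_ne_top (hp _)) hsum_top, Fin.sum_univ_castSucc,
    ← inv_add_inv_dualExp (hp (Fin.last n))]
  congr 1
  simp only [Fin.init]
  ring

lemma AqRatio_mul_hatRatio {p : Fin (n + 1) → ℝ≥0∞} (hp : ∀ i, 1 ≤ p i)
    {w : Fin (n + 1) → X → ℝ} (hw : ∀ i, ∀ᵐ x, 0 < w i x) (htop : volume R ≠ ∞)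
    (hhat0 : avgE R (hatWeight (Fin.init p) (Fin.init w)) ≠ 0)
    (hhat_top : avgE R (hatWeight (Fin.init p) (Fin.init w)) ≠ ∞) :
    AqRatio (p (Fin.last n)) (∑ i, (p i)⁻¹)⁻¹ (hatWeight (Fin.init p) (Fin.init w))
        (fun x => w (Fin.last n) x * hatWeight (Fin.init p) (Fin.init w) x
          ^ (1 / (dualExp (p (Fin.last n))).toReal)) R
        * hatRatio (Fin.init p) (Fin.init w) R
      = AvecRatio p w R := by
  have hinit : ∀ i, ∀ᵐ x, 0 < Fin.init w i x := fun i => hw i.castSucc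
  have hhat := ae_hatWeight_pos (Fin.init p) hinit
  have hq : (∑ i, (p i)⁻¹)⁻¹ ≠ 0 :=
    ENNReal.inv_ne_zero.2 (sum_ne_top.2 fun i _ => inv_ne_top_of_one_le (hp i))
  have hρ : (hatExp (Fin.init p)).toReal ≠ 0 :=
    (toReal_pos (hatExp_ne_zero fun i => hp i.castSucc) (hatExp_ne_top _)).ne'
  have hmain : avgE R (hatWeight (Fin.init p) (Fin.init w)) ^ (1 / (hatExp (Fin.init p)).toReal)
      = mainFactor R (fun x => ∏ i, Fin.init w i x) (hatExp (Fin.init p)) := by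
    rw [mainFactor, if_neg (hatExp_ne_top _)]
    rfl
  have hprod : ∀ᵐ x, w (Fin.last n) x * hatWeight (Fin.init p) (Fin.init w) x
      ^ (1 / (hatExp (Fin.init p)).toReal) = ∏ i, w i x := by
    filter_upwards [ae_prod_pos hinit] with x hx
    rw [hatWeight, one_div, Real.rpow_rpow_inv hx.le hρ, Fin.prod_univ_castSucc, mul_comm]
    rfl
  rw [hatRatio, ← hmain, ← mul_assoc, ← one_div_dualExp_last_add_one_div hp,
    AqRatio_mul_avgE_rpow htop (hw _) hhat hhat0 hhat_top (hp _) hq,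
    one_div_dualExp_last_add_one_div hp, mainFactor_congr_ae hprod, AvecRatio,
    Fin.prod_univ_castSucc fun i => dualFactor R (w i) (p i), mul_assoc,
    mul_comm (dualFactor R _ _)]
  rfl

lemma iSup_hatRatio_lt_top {𝓑 : Set (Set X)} (h𝓑 : ∀ R ∈ 𝓑, volume R ≠ 0 ∧ volume R ≠ ∞)
    {p : Fin n → ℝ≥0∞} (hp : ∀ i, 1 ≤ p i) {w : Fin n → X → ℝ}
    (hwm : ∀ i, AEMeasurable (w i)) (hw : ∀ i, ∀ᵐ x, 0 < w i x)
    (hlin : ∀ i, (⨆ R ∈ 𝓑, ArRatio (((n : ℝ≥0∞) + 1) / ((n : ℝ≥0∞) + (p i)⁻¹)) R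
      (fun x => w i x ^ (((n : ℝ≥0∞) + (p i)⁻¹)⁻¹).toReal)) < ∞)
    (hhat : (⨆ R ∈ 𝓑, ArRatio (((n : ℝ≥0∞) + 1) * hatExp p) R (hatWeight p w)) < ∞) :
    (⨆ R ∈ 𝓑, hatRatio p w R) < ∞ := by
  refine lt_of_le_of_lt (iSup₂_le fun R hR => ?_) (mul_lt_top
    (rpow_lt_top_of_nonneg (y := (1 + ∑ i, (p i)⁻¹).toReal) toReal_nonneg hhat.ne)
    (prod_lt_top fun i (_ : i ∈ Finset.univ) => rpow_lt_top_of_nonneg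
      (y := ((n : ℝ≥0∞) + (p i)⁻¹).toReal) toReal_nonneg (hlin i).ne))
  refine (hatRatio_le_ArRatio_rpow_mul_prod (h𝓑 R hR).1 (h𝓑 R hR).2 hp hwm hw).trans ?_
  gcongr with i
  · exact le_iSup₂ (f := fun R _ => ArRatio _ R _) R hR
  · exact le_iSup₂ (f := fun R _ => ArRatio _ R _) R hR

theorem statement14_general {𝓑 : Set (Set X)} (h𝓑 : ∀ R ∈ 𝓑, volume R ≠ 0 ∧ volume R ≠ ∞)
    (p : Fin (n + 1) → ℝ≥0∞) (hp : ∀ i, 1 ≤ p i) (w : Fin (n + 1) → X → ℝ)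
    (hwm : ∀ i, AEMeasurable (w i)) (hw : ∀ i, ∀ᵐ x, 0 < w i x)
    (hlin : ∀ i : Fin n, (⨆ R ∈ 𝓑, ArRatio
      (((n : ℝ≥0∞) + 1) / ((n : ℝ≥0∞) + (p i.castSucc)⁻¹)) R
      (fun x => w i.castSucc x ^ (((n : ℝ≥0∞) + (p i.castSucc)⁻¹)⁻¹).toReal)) < ∞)
    (hhat : (⨆ R ∈ 𝓑, ArRatio (((n : ℝ≥0∞) + 1) * hatExp (Fin.init p)) R
      (hatWeight (Fin.init p) (Fin.init w))) < ∞) :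
    (⨆ R ∈ 𝓑, AvecRatio p w R) < ∞ ↔
      (⨆ R ∈ 𝓑, AqRatio (p (Fin.last n)) (∑ i, (p i)⁻¹)⁻¹ (hatWeight (Fin.init p) (Fin.init w))
        (fun x => w (Fin.last n) x * hatWeight (Fin.init p) (Fin.init w) x
          ^ (1 / (dualExp (p (Fin.last n))).toReal)) R) < ∞ := by
  have hp_init : ∀ i, 1 ≤ Fin.init p i := fun i => hp i.castSucc
  have hwm_init : ∀ i, AEMeasurable (Fin.init w i) := fun i => hwm i.castSucc
  have hw_init : ∀ i, ∀ᵐ x, 0 < Fin.init w i x := fun i => hw i.castSucc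
  have hhat_R (R) (hR : R ∈ 𝓑) := ((le_iSup₂ R hR).trans_lt hhat).ne
  have hfactor (R) (hR : R ∈ 𝓑) := AqRatio_mul_hatRatio hp hw (h𝓑 R hR).2
    (avgE_ne_zero (h𝓑 R hR).1 (h𝓑 R hR).2 (aemeasurable_hatWeight _ hwm_init)
      (ae_hatWeight_pos _ hw_init))
    (avgE_hatWeight_ne_top (h𝓑 R hR).1 (h𝓑 R hR).2 hp_init hwm_init hw_init (hhat_R R hR))
  constructor
  · refine fun hvec => lt_of_le_of_lt (iSup₂_mono fun R hR => ?_) hvec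
    rw [← hfactor R hR]
    exact le_mul_of_one_le_right'
      (one_le_hatRatio (h𝓑 R hR).1 (h𝓑 R hR).2 hp_init hwm_init hw_init)
  · refine fun hq => lt_of_le_of_lt (iSup₂_le fun R hR => ?_)
      (mul_lt_top hq (iSup_hatRatio_lt_top h𝓑 hp_init hwm_init hw_init hlin hhat))
    rw [← hfactor R hR]
    exact mul_le_mul' (le_iSup₂ (f := fun R _ => AqRatio _ _ _ _ R) R hR)
      (le_iSup₂ (f := fun R _ => hatRatio _ _ R) R hR)

end reduction

section rectangles

lemma IsCube.volume_ne_zero_and_ne_top {d : ℕ} {I : Set (Fin d → ℝ)} (hI : IsCube I) :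
    volume I ≠ 0 ∧ volume I ≠ ∞ := by
  obtain ⟨a, h, hpos, rfl⟩ := hI
  rw [cubeOf, Real.volume_pi_Ico]
  exact ⟨Finset.prod_ne_zero_iff.2 fun i _ => by simpa using hpos, prod_ne_top fun i _ => by simp⟩

lemma IsRect.volume_ne_zero_and_ne_top {d₁ d₂ : ℕ} {R : Set (Pt d₁ d₂)} (hR : IsRect R) :
    volume R ≠ 0 ∧ volume R ≠ ∞ := by
  obtain ⟨I₁, I₂, hI₁, hI₂, rfl⟩ := hR
  obtain ⟨h0₁, htop₁⟩ := hI₁.volume_ne_zero_and_ne_top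
  obtain ⟨h0₂, htop₂⟩ := hI₂.volume_ne_zero_and_ne_top
  rw [Measure.volume_eq_prod, Measure.prod_prod]
  exact ⟨mul_ne_zero h0₁ h0₂, mul_ne_top htop₁ htop₂⟩

end rectangles

/-- Reduction of the multilinear class to a weighted linear class.
With `n + 1` weights `w_1, …, w_{n+1}` (so that the `n` of the informal statement is
`n + 1` here), `ρ = (1 + ∑_{i ≤ n} 1/p_i)⁻¹`, assuming
`w_i^{1/(n + 1/p_i)} ∈ A_{(n+1)/(n + 1/p_i)}` for `i ≤ n` and
`ŵ := (∏_{i ≤ n} w_i)^ρ ∈ A_{(n+1)ρ}`, we have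
`(w_1,…,w_{n+1}) ∈ A_{p⃗}` iff `W := w_{n+1} ŵ^{1/p_{n+1}'} ∈ A_{p_{n+1}, p}(ŵ)`. -/
theorem statement14 {d₁ d₂ n : ℕ}
    (p : Fin (n + 1) → ℝ≥0∞) (hp : ∀ i, 1 ≤ p i)
    (w : Fin (n + 1) → Pt d₁ d₂ → ℝ) (hw : ∀ i, Measurable (w i))
    (hwpos : ∀ i, ∀ᵐ x ∂(volume : Measure (Pt d₁ d₂)), 0 < w i x)
    (hlin : ∀ i : Fin n,
      ArRect (((n : ℝ≥0∞) + 1) / ((n : ℝ≥0∞) + (p i.castSucc)⁻¹))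
          (fun x => w i.castSucc x ^ (((n : ℝ≥0∞) + (p i.castSucc)⁻¹)⁻¹).toReal) < ∞)
    (hhat : ArRect (((n : ℝ≥0∞) + 1) * (1 + ∑ i : Fin n, (p i.castSucc)⁻¹)⁻¹)
        (fun x => (∏ i : Fin n, w i.castSucc x) ^
          ((1 + ∑ i : Fin n, (p i.castSucc)⁻¹)⁻¹).toReal) < ∞) :
    AvecRect p w < ∞ ↔
      AqRect (p (Fin.last n)) (∑ i, (p i)⁻¹)⁻¹
        (fun x => (∏ i : Fin n, w i.castSucc x) ^
          ((1 + ∑ i : Fin n, (p i.castSucc)⁻¹)⁻¹).toReal)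
        (fun x => w (Fin.last n) x *
          ((∏ i : Fin n, w i.castSucc x) ^
            ((1 + ∑ i : Fin n, (p i.castSucc)⁻¹)⁻¹).toReal) ^
            (1 / (dualExp (p (Fin.last n))).toReal)) < ∞ :=
  statement14_general (𝓑 := {R | IsRect R}) (fun _ hR => hR.volume_ne_zero_and_ne_top) p hp w
    (fun i => (hw i).aemeasurable) hwpos hlin hhat
end
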